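/- Let Λ be a basic finite-dimensional algebra over an algebraically closed field and C an irreducible component of Rep_d(Λ). Then there exist a decomposition d = Σ_{r=1}^s d^{(r)} and indecomposable irreducible components C_r of Rep_{d^{(r)}}(Λ) for 1 ≤ r ≤ s such that C is the Zariski closure of the direct sum C_1 ⊕ ⋯ ⊕ C_s. Moreover, the dimension vectors d^{(r)} and the components C_r with these properties are unique up to reordering. -/

import Mathlib

open Finset

/-! # Varieties of representations of a quiver with relations: basic setup -/

/-- The Zariski topology on the affine space `ι → K`: it is generated by the basic open
sets `D(p) = {x | p(x) ≠ 0}`, where `p` ranges over multivariate polynomials. -/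
def zariskiTopology (ι K : Type) [CommSemiring K] : TopologicalSpace (ι → K) :=
  TopologicalSpace.generateFrom
    {U | ∃ p : MvPolynomial ι K, U = {x | MvPolynomial.eval x p ≠ 0}}

/-- A finite quiver `Q`: vertices `Fin n`, arrows `Fin numArrows` with source and
target maps. -/
structure QuiverData where
  n : ℕ
  numArrows : ℕ
  src : Fin numArrows → Fin n
  tgt : Fin numArrows → Fin n

namespace QuiverData

variable (Q : QuiverData) (d : Fin Q.n → ℕ) (K : Type) [Field K]

/-- Index of the coordinates of the affine space of `d`-dimensional representations:
for each arrow `a` a matrix entry index in `Fin (d (tgt a)) × Fin (d (src a))`. -/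
abbrev Coords := Σ a : Fin Q.numArrows, Fin (d (Q.tgt a)) × Fin (d (Q.src a))

/-- The affine space of `d`-dimensional representations of `Q`:
a point `x` assigns to each arrow `a` a `d (tgt a) × d (src a)` matrix over `K`. -/
abbrev RepSpace := Coords Q d → K

/-- `RepSpace` carries the Zariski topology. -/
noncomputable instance instRepTop : TopologicalSpace (RepSpace Q d K) :=
  zariskiTopology (Coords Q d) K

/-- The underlying `K`-vector space `⊕ᵢ K^{dᵢ}` of any `d`-dimensional representation. -/
abbrev Carrier := (Σ i : Fin Q.n, Fin (d i)) → K

/-- The projection onto the component of the `i`-th vertex (action of the primitive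
idempotent `eᵢ`). -/
def proj (i : Fin Q.n) : Carrier Q d K →ₗ[K] Carrier Q d K where
  toFun m := fun jv => if jv.1 = i then m jv else 0
  map_add' u v := by
    funext jv; by_cases h : jv.1 = i <;> simp [h]
  map_smul' c u := by
    funext jv; by_cases h : jv.1 = i <;> simp [h]

/-- The action of the arrow `a` on the carrier space of the representation `x`. -/
noncomputable def arrowMap (x : RepSpace Q d K) (a : Fin Q.numArrows) :
    Carrier Q d K →ₗ[K] Carrier Q d K where
  toFun m := fun jv =>
    if h : jv.1 = Q.tgt a then
      ∑ w : Fin (d (Q.src a)), x ⟨a, (Fin.cast (congrArg d h) jv.2, w)⟩ * m ⟨Q.src a, w⟩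
    else 0
  map_add' u v := by
    funext jv
    by_cases h : jv.1 = Q.tgt a <;> simp [h, mul_add, Finset.sum_add_distrib]
  map_smul' c u := by
    funext jv
    by_cases h : jv.1 = Q.tgt a <;>
      simp [h, Finset.mul_sum, mul_comm, mul_left_comm, mul_assoc]

/-- The action of a word `w = [a_k, …, a_1]` of arrows on the representation `x`
(the arrow `a_1` acts first; non-composable words act as `0`). -/
noncomputable def wordMap (x : RepSpace Q d K) (w : List (Fin Q.numArrows)) :
    Module.End K (Carrier Q d K) :=
  (w.map fun a => (arrowMap Q d K x a : Module.End K (Carrier Q d K))).prod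

/-- The submodule `J^l · M_x` of the module `M_x`: the sum of the images of all words of
arrows of length `l` (for an admissible ideal, the radical acts through the arrows). -/
noncomputable def radPow (x : RepSpace Q d K) (l : ℕ) : Submodule K (Carrier Q d K) :=
  ⨆ w : {w : List (Fin Q.numArrows) // w.length = l},
    LinearMap.range (wordMap Q d K x w.1)

/-- The socle series of `M_x`: `socPow x l = soc_l(M_x)`. -/
noncomputable def socPow (x : RepSpace Q d K) : ℕ → Submodule K (Carrier Q d K)
  | 0 => ⨅ a, LinearMap.ker (arrowMap Q d K x a)
  | (l+1) => ⨅ a, (socPow x l).comap (arrowMap Q d K x a)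

/-- The dimension, at the vertex `i`, of a (vertex-graded) subspace `N`. -/
noncomputable def vdim (N : Submodule K (Carrier Q d K)) (i : Fin Q.n) : ℕ :=
  Module.finrank K (N.map (proj Q d K i))

/-- The radical layering `S(M_x) = (M/JM, JM/J²M, …, J^L M/J^{L+1} M)` of the module `M_x`,
recorded through the dimension vectors of its semisimple layers. -/
noncomputable def radLayering (L : ℕ) (x : RepSpace Q d K) :
    Fin (L+1) → Fin Q.n → ℕ :=
  fun l i => vdim Q d K (radPow Q d K x l) i - vdim Q d K (radPow Q d K x (l+1)) i

/-- The socle layering `S*(M_x) = (soc₀M, soc₁M/soc₀M, …)` of the module `M_x`, recorded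
through the dimension vectors of its semisimple layers. -/
noncomputable def socLayering (L : ℕ) (x : RepSpace Q d K) :
    Fin (L+1) → Fin Q.n → ℕ :=
  fun l i => vdim Q d K (socPow Q d K x l) i -
    (if (l : ℕ) = 0 then 0 else vdim Q d K (socPow Q d K x ((l : ℕ) - 1)) i)

end QuiverData

/-- The dominance order on semisimple sequences (recorded as sequences of dimension
vectors): `dominates S S'` means `S ≤ S'`, i.e. `⊕_{j≤l} S_j ⊆ ⊕_{j≤l} S'_j` for all `l`. -/
def dominates {n L : ℕ} (S S' : Fin (L+1) → Fin n → ℕ) : Prop :=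
  ∀ (l : Fin (L+1)) (i : Fin n),
    ∑ j ∈ Finset.univ.filter (fun j => j ≤ l), S j i ≤
      ∑ j ∈ Finset.univ.filter (fun j => j ≤ l), S' j i

/-- A semisimple sequence has dimension vector `d` if its layers' dimension vectors sum
to `d`. -/
def hasDimVec {n L : ℕ} (S : Fin (L+1) → Fin n → ℕ) (d : Fin n → ℕ) : Prop :=
  ∀ i, ∑ l, S l i = d i

namespace QuiverData

variable (Q : QuiverData) (d : Fin Q.n → ℕ) (K : Type) [Field K]

/-- Evaluation of a formal noncommutative polynomial in the vertices (`Sum.inl`) and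
arrows (`Sum.inr`) of `Q` on the representation `x`; an element of the path algebra `KQ`
is represented by such a polynomial. -/
noncomputable def evalRel (x : RepSpace Q d K) :
    FreeAlgebra K (Fin Q.n ⊕ Fin Q.numArrows) →ₐ[K] Module.End K (Carrier Q d K) :=
  FreeAlgebra.lift K
    (Sum.elim (fun i => (proj Q d K i : Module.End K (Carrier Q d K)))
      (fun a => (arrowMap Q d K x a : Module.End K (Carrier Q d K))))

/-- The affine variety `Rep_d(Λ)` for `Λ = KQ/I`, where the ideal `I` is generated by the
set `R` of relations: the set of points of `RepSpace` annihilating every relation. -/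
def RepVar (R : Set (FreeAlgebra K (Fin Q.n ⊕ Fin Q.numArrows))) :
    Set (RepSpace Q d K) :=
  {x | ∀ r ∈ R, evalRel Q d K x r = 0}

/-- The affine variety `Rep_d(Λ)` for the truncated path algebra
`Λ = KQ/⟨all paths of length L+1⟩`. -/
def TruncRepVar (L : ℕ) : Set (RepSpace Q d K) :=
  {x | ∀ w : List (Fin Q.numArrows), w.length = L + 1 → wordMap Q d K x w = 0}

/-- A submodule of `M_x`, i.e. a subspace stable under the arrows and the vertex
idempotents. -/
def Stable (x : RepSpace Q d K) (N : Submodule K (Carrier Q d K)) : Prop :=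
  (∀ a, N.map (arrowMap Q d K x a) ≤ N) ∧ ∀ i, N.map (proj Q d K i) ≤ N

/-- A submodule `N` of `M_x` is indecomposable (as a module). -/
def IndecompSub (x : RepSpace Q d K) (N : Submodule K (Carrier Q d K)) : Prop :=
  N ≠ ⊥ ∧ ∀ N₁ N₂ : Submodule K (Carrier Q d K),
    Stable Q d K x N₁ → Stable Q d K x N₂ → N₁ ≤ N → N₂ ≤ N →
    N₁ ⊔ N₂ = N → N₁ ⊓ N₂ = ⊥ → N₁ = ⊥ ∨ N₂ = ⊥

/-- The module `M_x` is indecomposable. -/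
def IndecompRep (x : RepSpace Q d K) : Prop :=
  IndecompSub Q d K x ⊤

/-- The module `M_x` is uniserial: its submodules form a chain. -/
def UniserialRep (x : RepSpace Q d K) : Prop :=
  ∀ N₁ N₂ : Submodule K (Carrier Q d K),
    Stable Q d K x N₁ → Stable Q d K x N₂ → N₁ ≤ N₂ ∨ N₂ ≤ N₁

/-- `M_x` decomposes as a direct sum of `s` indecomposable submodules whose dimension
vectors are `D 0, …, D (s-1)`. -/
def DecompWith (x : RepSpace Q d K) (s : ℕ) (D : Fin s → Fin Q.n → ℕ) : Prop :=
  ∃ N : Fin s → Submodule K (Carrier Q d K),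
    (∀ r, Stable Q d K x (N r)) ∧
    (∀ r, Disjoint (N r) (⨆ t, ⨆ (_ : t ≠ r), N t)) ∧
    (⨆ r, N r) = ⊤ ∧
    (∀ r, IndecompSub Q d K x (N r)) ∧
    ∀ r i, vdim Q d K (N r) i = D r i

/-- A homomorphism of representations `M_x → M_y` (for possibly different dimension
vectors): a linear map commuting with the arrow actions and the vertex projections. -/
def RepHom (dx dy : Fin Q.n → ℕ) (x : RepSpace Q dx K) (y : RepSpace Q dy K)
    (φ : Carrier Q dx K →ₗ[K] Carrier Q dy K) : Prop :=
  (∀ a, φ ∘ₗ arrowMap Q dx K x a = arrowMap Q dy K y a ∘ₗ φ) ∧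
  ∀ i, φ ∘ₗ proj Q dx K i = proj Q dy K i ∘ₗ φ

/-- The submodule `N` of `M_x` is isomorphic, as a representation, to `M_y`. -/
def SubrepIso (dy : Fin Q.n → ℕ) (x : RepSpace Q d K)
    (N : Submodule K (Carrier Q d K)) (y : RepSpace Q dy K) : Prop :=
  ∃ φ : Carrier Q d K →ₗ[K] Carrier Q dy K,
    N ⊓ LinearMap.ker φ = ⊥ ∧ N.map φ = ⊤ ∧
    (∀ a, ∀ m ∈ N, φ (arrowMap Q d K x a m) = arrowMap Q dy K y a (φ m)) ∧
    (∀ i, ∀ m ∈ N, φ (proj Q d K i m) = proj Q dy K i (φ m))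

/-- The representations `M_x` and `M_y` are isomorphic; the isomorphism classes are
exactly the orbits of the `GL(d)`-action. -/
def IsoRep (x y : RepSpace Q d K) : Prop :=
  ∃ φ : Carrier Q d K ≃ₗ[K] Carrier Q d K,
    (∀ a m, φ (arrowMap Q d K x a m) = arrowMap Q d K y a (φ m)) ∧
    ∀ i m, φ (proj Q d K i m) = proj Q d K i (φ m)

/-- The `GL(d)`-orbit of the point `x`, i.e. the set of points encoding modules
isomorphic to `M_x`. -/
def orbitSet (x : RepSpace Q d K) : Set (RepSpace Q d K) :=
  {y | IsoRep Q d K x y}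

/-- Given a family `P` of varieties `Rep_dv(Λ)` (one for every dimension vector `dv`),
`Ext¹_Λ(M_x, M_y) = 0`: every extension `0 → M_y → E → M_x → 0` of `Λ`-modules splits. -/
def Ext1Zero (P : ∀ dv : Fin Q.n → ℕ, Set (RepSpace Q dv K))
    (dx dy : Fin Q.n → ℕ) (x : RepSpace Q dx K) (y : RepSpace Q dy K) : Prop :=
  ∀ z ∈ P (fun i => dx i + dy i),
    ∀ (ι : Carrier Q dy K →ₗ[K] Carrier Q (fun i => dx i + dy i) K)
      (π : Carrier Q (fun i => dx i + dy i) K →ₗ[K] Carrier Q dx K),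
      RepHom Q K dy (fun i => dx i + dy i) y z ι →
      RepHom Q K (fun i => dx i + dy i) dx z x π →
      Function.Injective ι → Function.Surjective π →
      LinearMap.ker π = LinearMap.range ι →
      ∃ σ : Carrier Q dx K →ₗ[K] Carrier Q (fun i => dx i + dy i) K,
        RepHom Q K dx (fun i => dx i + dy i) x z σ ∧ π ∘ₗ σ = LinearMap.id

/-- The direct sum `C₁ ⊕ ⋯ ⊕ C_s` of subvarieties `C_r ⊆ Rep_{D r}(Λ)`: the set of
points `x ∈ Rep_d(Λ)` whose module decomposes as `M_x ≅ ⊕_r M^{(r)}` with `M^{(r)}`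
encoded by a point of `C_r`. -/
def DirectSumSet (s : ℕ) (D : Fin s → Fin Q.n → ℕ)
    (Cs : ∀ r : Fin s, Set (RepSpace Q (D r) K)) : Set (RepSpace Q d K) :=
  {x | ∃ N : Fin s → Submodule K (Carrier Q d K),
    (∀ r, Stable Q d K x (N r)) ∧
    (∀ r, Disjoint (N r) (⨆ t, ⨆ (_ : t ≠ r), N t)) ∧
    (⨆ r, N r) = ⊤ ∧
    ∀ r, ∃ y ∈ Cs r, SubrepIso Q d K (D r) x (N r) y}

/-- The endomorphism space `End_Λ(M_x)` of the module `M_x`. -/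
def endSpace (x : RepSpace Q d K) :
    Submodule K (Carrier Q d K →ₗ[K] Carrier Q d K) where
  carrier := {φ | RepHom Q K d d x x φ}
  add_mem' := by
    intro φ ψ hφ hψ
    exact ⟨fun a => by rw [LinearMap.add_comp, LinearMap.comp_add, hφ.1 a, hψ.1 a],
      fun i => by rw [LinearMap.add_comp, LinearMap.comp_add, hφ.2 i, hψ.2 i]⟩
  zero_mem' := by
    exact ⟨fun a => by simp, fun i => by simp⟩
  smul_mem' := by
    intro c φ hφ
    exact ⟨fun a => by rw [LinearMap.smul_comp, LinearMap.comp_smul, hφ.1 a],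
      fun i => by rw [LinearMap.smul_comp, LinearMap.comp_smul, hφ.2 i]⟩

/-- A word of arrows is a (composable) path when read in function-composition order. -/
def IsPathWord (w : List (Fin Q.numArrows)) : Prop :=
  List.Chain' (fun a b => Q.src a = Q.tgt b) w

/-- The quiver `Q` has no oriented cycles. -/
def Acyclic : Prop :=
  ∀ (a : Fin Q.numArrows) (w : List (Fin Q.numArrows)),
    IsPathWord Q (a :: w) →
      Q.tgt a ≠ Q.src ((a :: w).getLast (List.cons_ne_nil a w))

/-- A filtration `M_x = F 0 ⊇ F 1 ⊇ ⋯ ⊇ F (L+1) = 0` by submodules which is governed by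
the semisimple sequence `S`: each layer `F l / F (l+1)` is semisimple, isomorphic to `S l`. -/
def Governed (L : ℕ) (x : RepSpace Q d K) (S : Fin (L+1) → Fin Q.n → ℕ)
    (F : Fin (L+2) → Submodule K (Carrier Q d K)) : Prop :=
  F 0 = ⊤ ∧ F (Fin.last (L+1)) = ⊥ ∧
  (∀ l : Fin (L+1), F l.succ ≤ F l.castSucc) ∧
  (∀ (l : Fin (L+2)) (i : Fin Q.n), (F l).map (proj Q d K i) ≤ F l) ∧
  (∀ (l : Fin (L+1)) (a : Fin Q.numArrows),
      (F l.castSucc).map (arrowMap Q d K x a) ≤ F l.succ) ∧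
  ∀ (l : Fin (L+1)) (i : Fin Q.n),
      vdim Q d K (F l.castSucc) i = S l i + vdim Q d K (F l.succ) i

/-- `Filt S`: the set of points whose module has a filtration governed by `S`. -/
def FiltSet (L : ℕ) (S : Fin (L+1) → Fin Q.n → ℕ) : Set (RepSpace Q d K) :=
  {x | ∃ F, Governed Q d K L x S F}

/-- `Γ(M_x)`: the number of semisimple sequences which are realizable (i.e. occur as the
radical layering of a module in the variety `P`) and which govern some filtration of `M_x`. -/
noncomputable def gammaCount (L : ℕ) (P : Set (RepSpace Q d K))
    (x : RepSpace Q d K) : ℕ :=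
  Set.ncard {S : Fin (L+1) → Fin Q.n → ℕ |
    (∃ y ∈ P, radLayering Q d K L y = S) ∧ ∃ F, Governed Q d K L x S F}

/-- `Sstar` is the generic (= minimal, attained) socle layering of the modules in `W`. -/
def GenSoc (L : ℕ) (W : Set (RepSpace Q d K))
    (Sstar : Fin (L+1) → Fin Q.n → ℕ) : Prop :=
  (∀ x ∈ W, dominates Sstar (socLayering Q d K L x)) ∧
  ∃ x ∈ W, socLayering Q d K L x = Sstar

end QuiverData

namespace QuiverData

variable (Q : QuiverData)

/-- The `i`-th entry of the row vector `e·A` (over `ℤ`), where `A` is the adjacency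
matrix of `Q`: the sum of `e (src a)` over all arrows `a` ending at `i`. -/
def inflowZ (e : Fin Q.n → ℤ) (i : Fin Q.n) : ℤ :=
  ∑ a ∈ Finset.univ.filter (fun a => Q.tgt a = i), e (Q.src a)

/-- The `i`-th entry of the row vector `e·B` (over `ℤ`), where `B` is the transpose of
the adjacency matrix of `Q`. -/
def outflowZ (e : Fin Q.n → ℤ) (i : Fin Q.n) : ℤ :=
  ∑ a ∈ Finset.univ.filter (fun a => Q.src a = i), e (Q.tgt a)

/-- Partial sums `t⁽⁰⁾ + ⋯ + t⁽ˡ⁾` of the recursion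
`t⁽⁰⁾ = sup{0, d − d·A}`, `t⁽ˡ⁺¹⁾ = sup{0, (d − ∑_{k≤l} t⁽ᵏ⁾) − (d − ∑_{k≤l} t⁽ᵏ⁾)·A}`
(computed componentwise). -/
def cumLayer (dz : Fin Q.n → ℤ) : ℕ → Fin Q.n → ℤ
  | 0 => fun i => max 0 (dz i - inflowZ Q dz i)
  | (l+1) => fun i =>
      cumLayer dz l i +
        max 0 ((dz i - cumLayer dz l i) -
          inflowZ Q (fun j => dz j - cumLayer dz l j) i)

/-- The positive part `∑ᵢ eᵢ fᵢ` of the Euler form of `Q`. -/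
def eulerHomPart (e f : Fin Q.n → ℕ) : ℕ := ∑ i, e i * f i

/-- The negative part `∑_{α} e_{src α} f_{tgt α}` of the Euler form of `Q`, so that
`⟨e, f⟩ = eulerHomPart e f − eulerExtPart e f`. -/
def eulerExtPart (e f : Fin Q.n → ℕ) : ℕ :=
  ∑ a, e (Q.src a) * f (Q.tgt a)

end QuiverData

/-- The quiver with a single vertex and `r` loops. -/
def QuiverData.loopQuiver (r : ℕ) : QuiverData :=
  ⟨1, r, fun _ => 0, fun _ => 0⟩

namespace QuiverData

variable (Q : QuiverData) (d : Fin Q.n → ℕ) (K : Type) [Field K]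

/-- The variety `Rep_d(Λ)` for `Λ = KQ/⟨Rels⟩`, regarded as a topological space with the
(subspace) Zariski topology. -/
abbrev GenV (Rels : Set (FreeAlgebra K (Fin Q.n ⊕ Fin Q.numArrows))) :=
  {y : RepSpace Q d K // y ∈ RepVar Q d K Rels}

/-- The variety `Rep_d(Λ)` for the truncated path algebra
`Λ = KQ/⟨paths of length L+1⟩`, regarded as a topological space. -/
abbrev TruncV (L : ℕ) := {y : RepSpace Q d K // y ∈ TruncRepVar Q d K L}

end QuiverData

open QuiverData in
/-- The property that the irreducible component `C` of `Rep_d(Λ)` is the closure of the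
direct sum of indecomposable irreducible components `Cs r` of the varieties
`Rep_{D r}(Λ)` (CONTEXT for Statement 3). -/
def IsCanonicalDecomposition (K : Type) [Field K]
    (Q : QuiverData) (d : Fin Q.n → ℕ)
    (Rels : Set (FreeAlgebra K (Fin Q.n ⊕ Fin Q.numArrows)))
    (C : Set (GenV Q d K Rels)) (s : ℕ) (D : Fin s → Fin Q.n → ℕ)
    (Cs : ∀ r : Fin s, Set (GenV Q (D r) K Rels)) : Prop :=
  (∀ i, d i = ∑ r, D r i) ∧
  (∀ r, Cs r ∈ irreducibleComponents (GenV Q (D r) K Rels)) ∧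
  (∀ r, ∃ U, U ⊆ Cs r ∧ (∃ W, IsOpen W ∧ U = Cs r ∩ W) ∧ Cs r ⊆ closure U ∧
      ∀ y ∈ U, IndecompRep Q (D r) K y.1) ∧
  C = closure {x : GenV Q d K Rels |
      x.1 ∈ DirectSumSet Q d K s D (fun r => Subtype.val '' Cs r)}

/-!
A point `y` of `Rep_d(Λ)` and bases of the vertex spaces of a module of the right dimension are the
same data, so the direct sum `S_1 ⊕ ⋯ ⊕ S_s` is the image of `S_1 × ⋯ × S_s × GL(d)` under a
morphism; it is irreducible with the `S_r`, and by Chevalley's theorem it contains a nonempty open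
subset of its closure when the `S_r` are locally closed. Products do not carry the product topology
here, but their nonempty open subsets are open in each variable separately, and this is enough to
move points one variable at a time.

Existence: if the modules encoded by a component `C` are not generically indecomposable, then `C` is
covered by the finitely many closures of sums `S_1 ⊕ S_2` of components for smaller dimension
vectors, hence contained in, and by maximality equal to, one of them; now induct on the dimension.

Uniqueness: cut each `C_r` down to the open subset of the points which encode indecomposable modules
and lie on no other component. Two decompositions of `C` give two dense open subsets of `C`, and at
a common point the theorem of Krull, Remak and Schmidt matches the summands.
-/

/-- An indecomposable module: it is nonzero, and it is not the internal direct sum of two nonzero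
submodules. -/
def IsIndecomposableModule (R M : Type*) [Ring R] [AddCommGroup M] [Module R M] : Prop :=
  Nontrivial M ∧ ∀ N₁ N₂ : Submodule R M, IsCompl N₁ N₂ → N₁ = ⊥ ∨ N₂ = ⊥

section KrullSchmidt

variable {R : Type*} [Ring R]

theorem IsIndecomposableModule.isLocalRing_end {M : Type*} [AddCommGroup M] [Module R M]
    [IsArtinian R M] [IsNoetherian R M] (hM : IsIndecomposableModule R M) :
    IsLocalRing (Module.End R M) := by
  obtain ⟨_, hM⟩ := hM
  refine IsLocalRing.of_isUnit_or_isUnit_one_sub_self fun f ↦ ?_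
  obtain ⟨n, hn⟩ :=
    (f.eventually_isCompl_ker_pow_range_pow.and (Filter.eventually_gt_atTop 0)).exists
  rcases hM _ _ hn.1 with hker | hrange
  · have hinj : Function.Injective (f ^ n) := LinearMap.ker_eq_bot.mp hker
    have hsurj : Function.Surjective (f ^ n) :=
      IsArtinian.surjective_of_injective_endomorphism _ hinj
    exact .inl ((isUnit_pow_iff hn.2.ne').mp ((Module.End.isUnit_iff _).mpr ⟨hinj, hsurj⟩))
  · exact .inr (IsNilpotent.isUnit_one_sub ⟨n, LinearMap.range_eq_bot.mp hrange⟩)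

theorem IsIndecomposableModule.bijective_of_isUnit_comp {M N : Type*} [AddCommGroup M] [Module R M]
    [Nontrivial M] [AddCommGroup N] [Module R N] (hN : IsIndecomposableModule R N)
    (f : M →ₗ[R] N) (g : N →ₗ[R] M) (hgf : IsUnit (g ∘ₗ f : Module.End R M)) :
    Function.Bijective f := by
  have hbij : Function.Bijective (g ∘ f) := (Module.End.isUnit_iff _).mp hgf
  have hinj : Function.Injective f := hbij.1.of_comp
  have hcompl : IsCompl (LinearMap.range f) (LinearMap.ker g) := by
    refine ⟨Submodule.disjoint_def.mpr ?_, codisjoint_iff.mpr (eq_top_iff.mpr fun y _ ↦ ?_)⟩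
    · rintro _ ⟨x, rfl⟩ hx
      rw [hbij.1 (a₁ := x) (a₂ := 0) (by simpa using hx), map_zero]
    · obtain ⟨x, hx⟩ := hbij.2 (g y)
      refine Submodule.mem_sup.mpr ⟨f x, ⟨x, rfl⟩, y - f x, ?_, add_sub_cancel _ _⟩
      rw [LinearMap.mem_ker, map_sub, ← hx, Function.comp_apply, sub_self]
  rcases hN.2 _ _ hcompl with hrange | hker
  · obtain ⟨x, hx⟩ := exists_ne (0 : M)
    have hfx : f x = 0 := LinearMap.congr_fun (LinearMap.range_eq_bot.mp hrange) x
    exact absurd (hinj (hfx.trans (map_zero f).symm)) hx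
  · exact ⟨hinj, hbij.2.of_comp_left (LinearMap.ker_eq_bot.mp hker)⟩

theorem nonempty_linearEquiv_of_prod {A A' B B' : Type*} [AddCommGroup A] [Module R A]
    [AddCommGroup A'] [Module R A'] [AddCommGroup B] [Module R B] [AddCommGroup B'] [Module R B']
    (e : (A × A') ≃ₗ[R] (B × B')) (he : Function.Bijective fun a ↦ (e (a, 0)).1) :
    Nonempty (A' ≃ₗ[R] B') := by
  let α : A ≃ₗ[R] B :=
    .ofBijective (LinearMap.fst R B B' ∘ₗ e.toLinearMap ∘ₗ LinearMap.inl R A A') he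
  let β : A' →ₗ[R] B := LinearMap.fst R B B' ∘ₗ e.toLinearMap ∘ₗ LinearMap.inr R A A'
  -- the graph of `-α⁻¹β` is the preimage of `0 × B'` under `e`
  let γ : A' →ₗ[R] A × A' := (-(α.symm.toLinearMap ∘ₗ β)).prod LinearMap.id
  have fst_e (p : A × A') : (e p).1 = α p.1 + β p.2 := by
    conv_lhs => rw [← Prod.fst_add_snd p, map_add]
    rfl
  have fst_e_γ (a' : A') : (e (γ a')).1 = 0 := by simp [fst_e, γ]
  refine ⟨.ofBijective (LinearMap.snd R B B' ∘ₗ e.toLinearMap ∘ₗ γ) ⟨?_, fun b' ↦ ?_⟩⟩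
  · refine (injective_iff_map_eq_zero _).mpr fun a' ha' ↦ ?_
    have : γ a' = 0 := e.map_eq_zero_iff.mp (Prod.ext (fst_e_γ a') ha')
    exact congrArg Prod.snd this
  · obtain ⟨⟨a, a'⟩, hp⟩ := e.surjective (0, b')
    have ha : α a + β a' = 0 := by rw [← fst_e (a, a'), hp]
    have hγ : γ a' = (a, a') := by
      refine Prod.ext ?_ rfl
      change -α.symm (β a') = a
      rw [← map_neg, neg_eq_of_add_eq_zero_left ha, α.symm_apply_apply]
    exact ⟨a', by simp [hγ, hp]⟩

theorem exists_bijective_of_comp_eq_id {κ : Type*} [Finite κ] {M : Type*} [AddCommGroup M]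
    [Module R M] [IsLocalRing (Module.End R M)] {N : κ → Type*} [∀ k, AddCommGroup (N k)]
    [∀ k, Module R (N k)] (hN : ∀ k, IsIndecomposableModule R (N k)) (f : M →ₗ[R] Π k, N k)
    (g : (Π k, N k) →ₗ[R] M) (hgf : g ∘ₗ f = LinearMap.id) :
    ∃ k, Function.Bijective fun x ↦ f x k := by
  classical
  have := Fintype.ofFinite κ
  have : Nontrivial M := not_subsingleton_iff_nontrivial.mp fun _ ↦
    not_subsingleton (Module.End R M) inferInstance
  have hsum : ∑ k, (g ∘ₗ LinearMap.single R N k) ∘ₗ (LinearMap.proj k ∘ₗ f) =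
      (1 : Module.End R M) := by
    ext x
    simp only [LinearMap.sum_apply, LinearMap.comp_apply, LinearMap.proj_apply,
      LinearMap.coe_single, ← map_sum, Finset.univ_sum_single]
    exact LinearMap.congr_fun hgf x
  obtain ⟨k, -, hk⟩ := IsLocalRing.exists_of_isUnit_sum (hsum ▸ isUnit_one)
  exact ⟨k, (hN k).bijective_of_isUnit_comp _ _ hk⟩

theorem exists_equiv_of_pi_linearEquiv_pi {ι κ : Type*} [Finite ι] [Finite κ]
    {M : ι → Type*} [∀ i, AddCommGroup (M i)] [∀ i, Module R (M i)]
    {N : κ → Type*} [∀ k, AddCommGroup (N k)] [∀ k, Module R (N k)]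
    (hM : ∀ i, IsLocalRing (Module.End R (M i))) (hN : ∀ k, IsIndecomposableModule R (N k))
    (e : (Π i, M i) ≃ₗ[R] Π k, N k) : ∃ σ : ι ≃ κ, ∀ i, Nonempty (M i ≃ₗ[R] N (σ i)) := by
  induction ι using Finite.induction_empty_option generalizing κ with
  | of_equiv f ih =>
    obtain ⟨σ, hσ⟩ := ih (fun i ↦ hM (f i)) hN ((LinearEquiv.piCongrLeft R M f).trans e)
    refine ⟨f.symm.trans σ, fun i ↦ ?_⟩
    obtain ⟨i, rfl⟩ := f.surjective i
    rw [Equiv.trans_apply, Equiv.symm_apply_apply]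
    exact hσ i
  | h_empty =>
    have : IsEmpty κ := ⟨fun k ↦ by
      have := (hN k).1
      have : Subsingleton (Π k, N k) := e.symm.injective.subsingleton
      exact not_subsingleton (N k) (Function.surjective_eval k).subsingleton⟩
    exact ⟨Equiv.equivOfIsEmpty _ _, fun i ↦ i.elim⟩
  | @h_option ι _ ih =>
    classical
    let e₁ := (LinearEquiv.piOptionEquivProd R (M := M)).symm.trans e
    have := hM none
    obtain ⟨k, hk⟩ := exists_bijective_of_comp_eq_id hN (e₁.toLinearMap ∘ₗ LinearMap.inl R _ _)
      (LinearMap.fst R _ _ ∘ₗ e₁.symm.toLinearMap) (LinearMap.ext fun a ↦ by simp)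
    let τ := Equiv.optionSubtypeNe k
    let e₂ := (LinearEquiv.piCongrLeft R N τ).symm.trans
      (LinearEquiv.piOptionEquivProd R (M := fun j ↦ N (τ j)))
    obtain ⟨e'⟩ := nonempty_linearEquiv_of_prod (e₁.trans e₂) hk
    obtain ⟨σ, hσ⟩ := ih (fun i ↦ hM (some i)) (fun j ↦ hN (τ (some j))) e'
    refine ⟨σ.optionCongr.trans τ, fun i ↦ ?_⟩
    cases i with
    | none => exact ⟨.ofBijective (LinearMap.proj k ∘ₗ e₁.toLinearMap ∘ₗ LinearMap.inl R _ _) hk⟩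
    | some i => exact hσ i

end KrullSchmidt

namespace zariskiTopology

open MvPolynomial Topology

variable {ι κ K : Type} [Field K]

scoped instance : TopologicalSpace (ι → K) := zariskiTopology ι K

theorem isOpen_eval_ne_zero (p : MvPolynomial ι K) : IsOpen {x : ι → K | eval x p ≠ 0} :=
  TopologicalSpace.isOpen_generateFrom_of_mem ⟨p, rfl⟩

theorem isClosed_eval_eq_zero (p : MvPolynomial ι K) : IsClosed {x : ι → K | eval x p = 0} :=
  isOpen_compl_iff.mp (isOpen_eval_ne_zero p)

theorem preimage_pointToPoint_basicOpen (p : MvPolynomial ι K) :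
    pointToPoint ⁻¹' (PrimeSpectrum.basicOpen p : Set (PrimeSpectrum (MvPolynomial ι K))) =
      {x : ι → K | eval x p ≠ 0} := by
  ext x
  simp [pointToPoint, aeval_eq_eval]

theorem isInducing_pointToPoint :
    IsInducing (pointToPoint : (ι → K) → PrimeSpectrum (MvPolynomial ι K)) where
  eq_induced := by
    rw [PrimeSpectrum.isTopologicalBasis_basic_opens.eq_generateFrom, induced_generateFrom_eq,
      ← Set.range_comp]
    exact congrArg TopologicalSpace.generateFrom <| Set.ext fun U ↦
      exists_congr fun p ↦ by rw [Function.comp_apply, preimage_pointToPoint_basicOpen, eq_comm]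

instance noetherianSpace [Finite ι] : TopologicalSpace.NoetherianSpace (ι → K) :=
  isInducing_pointToPoint.noetherianSpace

theorem isTopologicalBasis :
    TopologicalSpace.IsTopologicalBasis
      (Set.range fun p : MvPolynomial ι K ↦ {x : ι → K | eval x p ≠ 0}) := by
  simpa only [← Set.range_comp, Function.comp_def, preimage_pointToPoint_basicOpen] using
    PrimeSpectrum.isTopologicalBasis_basic_opens.isInducing isInducing_pointToPoint

theorem isPreirreducible_univ [Infinite K] : IsPreirreducible (Set.univ : Set (ι → K)) := by
  rintro U V hU hV ⟨x, -, hxU⟩ ⟨y, -, hyV⟩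
  obtain ⟨_, ⟨p, rfl⟩, hp, hpU⟩ := isTopologicalBasis.exists_subset_of_mem_open hxU hU
  obtain ⟨_, ⟨q, rfl⟩, hq, hqV⟩ := isTopologicalBasis.exists_subset_of_mem_open hyV hV
  have hpq : p * q ≠ 0 := mul_ne_zero (by rintro rfl; simp at hp) (by rintro rfl; simp at hq)
  obtain ⟨z, hz⟩ : ∃ z : ι → K, eval z (p * q) ≠ 0 := by
    contrapose! hpq
    exact MvPolynomial.funext (by simpa using hpq)
  rw [map_mul, mul_ne_zero_iff] at hz
  exact ⟨z, trivial, hpU hz.1, hqV hz.2⟩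

/-- The functions on affine space that are regular on the basic open set `δ ≠ 0`, that is, of the
form `p / δ ^ n` there. Their values where `δ` vanishes are unconstrained. -/
def regularFunctions (δ : MvPolynomial ι K) : Subalgebra K ((ι → K) → K) where
  carrier := {f | ∃ (p : MvPolynomial ι K) (n : ℕ), ∀ x,
    eval x δ ≠ 0 → f x * eval x δ ^ n = eval x p}
  mul_mem' := by
    rintro f g ⟨p, n, hp⟩ ⟨q, m, hq⟩
    refine ⟨p * q, n + m, fun x hx ↦ ?_⟩
    rw [map_mul, ← hp x hx, ← hq x hx, Pi.mul_apply]
    ring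
  add_mem' := by
    rintro f g ⟨p, n, hp⟩ ⟨q, m, hq⟩
    refine ⟨p * δ ^ m + q * δ ^ n, n + m, fun x hx ↦ ?_⟩
    simp only [map_add, map_mul, map_pow, ← hp x hx, ← hq x hx, Pi.add_apply]
    ring
  algebraMap_mem' c := ⟨C c, 0, by simp⟩

theorem eval_mem_regularFunctions (p δ : MvPolynomial ι K) :
    (fun x ↦ eval x p) ∈ regularFunctions δ :=
  ⟨p, 0, by simp⟩

theorem mem_regularFunctions_one {f : (ι → K) → K} :
    f ∈ regularFunctions 1 ↔ ∃ p : MvPolynomial ι K, ∀ x, f x = eval x p :=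
  ⟨fun ⟨p, _, h⟩ ↦ ⟨p, by simpa using h⟩, fun ⟨p, h⟩ ↦ ⟨p, 0, by simpa using h⟩⟩

theorem comp_mem_regularFunctions {δ : MvPolynomial ι K} {f : (ι → K) → κ → K}
    (hf : ∀ k, (fun x ↦ f x k) ∈ regularFunctions δ) (p : MvPolynomial κ K) :
    (fun x ↦ eval (f x) p) ∈ regularFunctions δ := by
  induction p using MvPolynomial.induction_on with
  | C a => exact ⟨C a, 0, by simp⟩
  | add p q hp hq => simpa using! add_mem hp hq
  | mul_X p i hp => simpa using! mul_mem hp (hf i)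

theorem continuousOn_of_mem_regularFunctions {δ : MvPolynomial ι K} {f : (ι → K) → κ → K}
    (hf : ∀ k, (fun x ↦ f x k) ∈ regularFunctions δ) : ContinuousOn f {x | eval x δ ≠ 0} := by
  refine isTopologicalBasis.continuousOn_iff.mpr ?_
  rintro _ ⟨p, rfl⟩
  obtain ⟨q, n, hq⟩ := comp_mem_regularFunctions hf p
  refine ⟨_, isOpen_eval_ne_zero q, Set.ext fun x ↦ and_congr_left fun hx ↦ ?_⟩
  have hδ : eval x δ ^ n ≠ 0 := pow_ne_zero n hx
  simp [← hq x hx, hδ]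

theorem continuous_of_mem_regularFunctions_one {f : (ι → K) → κ → K}
    (hf : ∀ k, (fun x ↦ f x k) ∈ regularFunctions 1) : Continuous f := by
  simpa using continuousOn_of_mem_regularFunctions hf

theorem isIrreducible_image_of_mem_regularFunctions [Infinite K] {δ : MvPolynomial ι K}
    (hδ : δ ≠ 0) {f : (ι → K) → κ → K} (hf : ∀ k, (fun x ↦ f x k) ∈ regularFunctions δ) :
    IsIrreducible (f '' {x | eval x δ ≠ 0}) := by
  refine IsIrreducible.image ⟨?_, ?_⟩ f (continuousOn_of_mem_regularFunctions hf)
  · contrapose! hδ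
    exact MvPolynomial.funext (by simpa [Set.eq_empty_iff_forall_notMem] using hδ)
  · exact isPreirreducible_univ.open_subset (isOpen_eval_ne_zero δ) (Set.subset_univ _)

theorem comap_bind₁_pointToPoint (q : κ → MvPolynomial ι K) (x : ι → K) :
    PrimeSpectrum.comap (bind₁ q).toRingHom (pointToPoint x) =
      pointToPoint fun k ↦ eval x (q k) := by
  ext p
  simp [pointToPoint, aeval_bind₁]

theorem pointToPoint_injective :
    Function.Injective (pointToPoint : (ι → K) → PrimeSpectrum (MvPolynomial ι K)) := by
  refine fun z w hzw ↦ funext fun k ↦ ?_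
  have hz : (X k - C (z k) : MvPolynomial ι K) ∈ (pointToPoint z).asIdeal := by
    simp [pointToPoint]
  rw [hzw] at hz
  simpa [pointToPoint, sub_eq_zero, eq_comm] using hz

theorem isConstructible_of_isLocallyClosed {X : Type*} [TopologicalSpace X]
    [TopologicalSpace.NoetherianSpace X] {T : Set X} (hT : IsLocallyClosed T) :
    IsConstructible T := by
  obtain ⟨U, Z, hU, hZ, rfl⟩ := hT
  have isConstructible_of_isOpen {V : Set X} (hV : IsOpen V) : IsConstructible V :=
    (TopologicalSpace.NoetherianSpace.isCompact V).isConstructible hV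
  exact (isConstructible_of_isOpen hU).inter
    (isConstructible_compl.mp (isConstructible_of_isOpen hZ.isOpen_compl))

theorem finitePresentation_bind₁ [Finite ι] [Finite κ] (q : κ → MvPolynomial ι K) :
    (bind₁ q).toRingHom.FinitePresentation := by
  refine RingHom.FinitePresentation.of_finiteType.mp
    (RingHom.FiniteType.of_comp_finiteType (f := C) ?_)
  have hC : (bind₁ q).toRingHom.comp C = C := RingHom.ext fun a ↦ bind₁_C_right q a
  exact hC ▸ RingHom.finiteType_algebraMap.mpr (inferInstanceAs
    (Algebra.FiniteType K (MvPolynomial ι K)))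

theorem exists_pointToPoint_mem [IsAlgClosed K] [Finite ι] [Finite κ] (q : κ → MvPolynomial ι K)
    {T : Set (PrimeSpectrum (MvPolynomial ι K))} (hT : IsLocallyClosed T) {z : κ → K}
    (hz : pointToPoint z ∈ PrimeSpectrum.comap (bind₁ q).toRingHom '' T) :
    ∃ x, pointToPoint x ∈ T ∧ (fun k ↦ eval x (q k)) = z := by
  let φ := PrimeSpectrum.comap (bind₁ q).toRingHom
  have hclosed : IsClosed {(pointToPoint z : PrimeSpectrum (MvPolynomial κ K))} :=
    (PrimeSpectrum.isClosed_singleton_iff_isMaximal _).mpr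
      (isMaximal_iff_eq_vanishingIdeal_singleton.mpr ⟨z, rfl⟩)
  have hfiber : IsLocallyClosed (T ∩ φ ⁻¹' {pointToPoint z}) :=
    hT.inter (hclosed.preimage (PrimeSpectrum.continuous_comap _)).isLocallyClosed
  obtain ⟨P, ⟨hPT, hPz⟩, hP⟩ := nonempty_inter_closedPoints hz hfiber
  obtain ⟨x, hx⟩ := isMaximal_iff_eq_vanishingIdeal_singleton.mp
    ((PrimeSpectrum.isClosed_singleton_iff_isMaximal P).mp hP)
  obtain rfl : P = pointToPoint x := PrimeSpectrum.ext hx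
  exact ⟨x, hPT, pointToPoint_injective ((comap_bind₁_pointToPoint q x).symm.trans hPz)⟩

/-- Chevalley's theorem for the points over an algebraically closed field. -/
theorem exists_finite_isLocallyClosed_image_eq_sUnion [IsAlgClosed K] [Finite ι] [Finite κ]
    (q : κ → MvPolynomial ι K) {Y : Set (ι → K)} (hY : IsLocallyClosed Y) :
    ∃ 𝒞 : Set (Set (κ → K)), 𝒞.Finite ∧ (∀ c ∈ 𝒞, IsLocallyClosed c) ∧
      (fun x k ↦ eval x (q k)) '' Y = ⋃₀ 𝒞 := by
  obtain ⟨T, hT, rfl⟩ := isInducing_pointToPoint.isLocallyClosed_iff.mp hY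
  obtain ⟨S, hS⟩ := PrimeSpectrum.exists_constructibleSetData_iff.mpr
    (PrimeSpectrum.isConstructible_comap_image (finitePresentation_bind₁ q)
      (isConstructible_of_isLocallyClosed hT))
  let piece (c : PrimeSpectrum.BasicConstructibleSetData (MvPolynomial κ K)) : Set (κ → K) :=
    pointToPoint ⁻¹' c.toSet
  refine ⟨piece '' S, S.finite_toSet.image _, ?_, ?_⟩
  · rintro _ ⟨c, -, rfl⟩
    exact ((PrimeSpectrum.isClosed_zeroLocus _).isLocallyClosed.inter
      (PrimeSpectrum.isClosed_zeroLocus _).isOpen_compl.isLocallyClosed).preimage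
      isInducing_pointToPoint.continuous
  · ext z
    have hz : pointToPoint z ∈ S.toSet ↔ z ∈ ⋃₀ (piece '' S) := by
      simp [PrimeSpectrum.ConstructibleSetData.toSet, piece]
    rw [← hz, hS]
    constructor
    · rintro ⟨x, hx, rfl⟩
      exact ⟨_, hx, comap_bind₁_pointToPoint q x⟩
    · exact exists_pointToPoint_mem q hT

end zariskiTopology

theorem exists_isOpen_closure_inter_subset_of_isIrreducible {X : Type*} [TopologicalSpace X]
    {S : Set X} (hS : IsIrreducible S) {𝒞 : Set (Set X)} (hfin : 𝒞.Finite)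
    (hloc : ∀ c ∈ 𝒞, IsLocallyClosed c) (hS𝒞 : S = ⋃₀ 𝒞) :
    ∃ O, IsOpen O ∧ (S ∩ O).Nonempty ∧ closure S ∩ O ⊆ S := by
  obtain ⟨_, hc, hSc⟩ := isIrreducible_iff_sUnion_isClosed.mp hS (hfin.toFinset.image closure)
    (by simp) (by
      rw [hS𝒞]
      exact fun x ⟨c, hc, hx⟩ ↦ ⟨closure c, by simpa using ⟨c, hc, rfl⟩, subset_closure hx⟩)
  obtain ⟨c, hc𝒞, rfl⟩ : ∃ c ∈ 𝒞, closure c = _ := by simpa using hc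
  obtain ⟨U, Z, hU, hZ, rfl⟩ := hloc c hc𝒞
  have hcS : U ∩ Z ⊆ S := hS𝒞 ▸ Set.subset_sUnion_of_mem hc𝒞
  obtain ⟨x, hx⟩ : (U ∩ Z).Nonempty := closure_nonempty_iff.mp (hS.nonempty.mono hSc)
  refine ⟨U, hU, ⟨x, hcS hx, hx.1⟩, fun z ⟨hz, hzU⟩ ↦ hcS ⟨hzU, ?_⟩⟩
  exact closure_minimal (hSc.trans (closure_minimal Set.inter_subset_right hZ)) hZ hz

/-- A set in a product of topological spaces is separately open if it is open in each variable,
the other variables being fixed. -/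
def IsSeparatelyOpen {J : Type*} [DecidableEq J] {X : J → Type*} [∀ j, TopologicalSpace (X j)]
    (A : Set (∀ j, X j)) : Prop :=
  ∀ x j, IsOpen {t | Function.update x j t ∈ A}

namespace IsSeparatelyOpen

variable {J : Type*} [Finite J] [DecidableEq J] {X : J → Type*} [∀ j, TopologicalSpace (X j)]
  {S : ∀ j, Set (X j)} {A B : Set (∀ j, X j)}

theorem nonempty_pi_univ_inter (hA : IsSeparatelyOpen A) (hB : IsSeparatelyOpen B)
    (hS : ∀ j, IsPreirreducible (S j)) (hSA : (Set.univ.pi S ∩ A).Nonempty)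
    (hSB : (Set.univ.pi S ∩ B).Nonempty) : (Set.univ.pi S ∩ (A ∩ B)).Nonempty := by
  have := Fintype.ofFinite J
  suffices h : ∀ T : Finset J, ∃ x ∈ Set.univ.pi S ∩ A, ∃ y ∈ Set.univ.pi S ∩ B,
      ∀ j ∈ T, x j = y j by
    obtain ⟨x, hx, y, hy, hxy⟩ := h univ
    obtain rfl : x = y := funext fun j ↦ hxy j (mem_univ j)
    exact ⟨x, hx.1, hx.2, hy.2⟩
  intro T
  induction T using Finset.induction_on with
  | empty =>
    obtain ⟨x, hx⟩ := hSA
    obtain ⟨y, hy⟩ := hSB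
    exact ⟨x, hx, y, hy, by simp⟩
  | insert j T _ ih =>
    obtain ⟨x, ⟨hxS, hxA⟩, y, ⟨hyS, hyB⟩, hxy⟩ := ih
    obtain ⟨t, htS, htA, htB⟩ := hS j _ _ (hA x j) (hB y j)
      ⟨x j, hxS j trivial, by simpa using hxA⟩ ⟨y j, hyS j trivial, by simpa using hyB⟩
    refine ⟨_, ⟨(Set.update_mem_pi_iff_of_mem hxS).mpr fun _ ↦ htS, htA⟩,
      _, ⟨(Set.update_mem_pi_iff_of_mem hyS).mpr fun _ ↦ htS, htB⟩, fun k hk ↦ ?_⟩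
    obtain rfl | hkj := eq_or_ne k j
    · simp
    · simpa [hkj] using hxy k (mem_of_mem_insert_of_ne hk hkj)

theorem nonempty_pi_univ_of_closure (hA : IsSeparatelyOpen A)
    (hSA : (Set.univ.pi (fun j ↦ closure (S j)) ∩ A).Nonempty) : (Set.univ.pi S ∩ A).Nonempty := by
  have := Fintype.ofFinite J
  suffices h : ∀ T : Finset J, ∃ x ∈ Set.univ.pi (fun j ↦ closure (S j)) ∩ A, ∀ j ∈ T, x j ∈ S j by
    obtain ⟨x, hx, hxS⟩ := h univ
    exact ⟨x, fun j _ ↦ hxS j (mem_univ j), hx.2⟩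
  intro T
  induction T using Finset.induction_on with
  | empty =>
    obtain ⟨x, hx⟩ := hSA
    exact ⟨x, hx, by simp⟩
  | insert j T _ ih =>
    obtain ⟨x, ⟨hx, hxA⟩, hxS⟩ := ih
    obtain ⟨t, htA, htS⟩ := mem_closure_iff.mp (hx j trivial) _ (hA x j) (by simpa using hxA)
    refine ⟨_, ⟨(Set.update_mem_pi_iff_of_mem hx).mpr fun _ ↦ subset_closure htS, htA⟩,
      fun k hk ↦ ?_⟩
    obtain rfl | hkj := eq_or_ne k j
    · simpa using htS
    · simpa [hkj] using hxS k (mem_of_mem_insert_of_ne hk hkj)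

end IsSeparatelyOpen

section FreeAlgebra

variable {K X M N : Type*} [CommRing K] [AddCommGroup M] [Module K M] [Module (FreeAlgebra K X) M]
  [IsScalarTower K (FreeAlgebra K X) M]

theorem freeAlgebra_smul_mem {N : Submodule K M}
    (hN : ∀ x : X, ∀ m ∈ N, FreeAlgebra.ι K x • m ∈ N) (a : FreeAlgebra K X) :
    ∀ m ∈ N, a • m ∈ N := by
  induction a using FreeAlgebra.induction with
  | grade0 c => exact fun m hm ↦ by simpa only [algebraMap_smul] using N.smul_mem c hm
  | grade1 x => exact hN x
  | mul a b ha hb => exact fun m hm ↦ by simpa only [mul_smul] using ha _ (hb m hm)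
  | add a b ha hb => exact fun m hm ↦ by simpa only [add_smul] using N.add_mem (ha m hm) (hb m hm)

variable [AddCommGroup N] [Module K N] [Module (FreeAlgebra K X) N]
  [IsScalarTower K (FreeAlgebra K X) N]

theorem map_freeAlgebra_smul (f : M →ₗ[K] N)
    (hf : ∀ (x : X) m, f (FreeAlgebra.ι K x • m) = FreeAlgebra.ι K x • f m)
    (a : FreeAlgebra K X) (m : M) : f (a • m) = a • f m := by
  induction a using FreeAlgebra.induction generalizing m with
  | grade0 c => simp only [algebraMap_smul, map_smul]
  | grade1 x => exact hf x m
  | mul a b ha hb => simp only [mul_smul, ha, hb]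
  | add a b ha hb => simp only [add_smul, map_add, ha, hb]

end FreeAlgebra

namespace QuiverData

variable {Q : QuiverData} {K : Type} [Field K] {d : Fin Q.n → ℕ}

variable (Q K) in
/-- The free algebra on the vertices and arrows of a quiver. Modules over the path algebra are
treated as modules over this algebra, `IsPathModule` recording the path algebra relations. -/
abbrev FreePathAlgebra : Type := FreeAlgebra K (Fin Q.n ⊕ Fin Q.numArrows)

variable (Q K) in
/-- The generator of the free path algebra at a vertex. -/
def vertex (i : Fin Q.n) : FreePathAlgebra Q K := FreeAlgebra.ι K (.inl i)

variable (Q K) in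
/-- The generator of the free path algebra at an arrow. -/
def arrow (a : Fin Q.numArrows) : FreePathAlgebra Q K := FreeAlgebra.ι K (.inr a)

/-- The module `M_x` encoded by a point `x`, over the free path algebra. -/
def RepModule (_ : RepSpace Q d K) : Type := Carrier Q d K

namespace RepModule

variable (x : RepSpace Q d K)

instance : AddCommGroup (RepModule x) := inferInstanceAs (AddCommGroup (Carrier Q d K))

instance : Module K (RepModule x) := inferInstanceAs (Module K (Carrier Q d K))

instance : FiniteDimensional K (RepModule x) :=
  inferInstanceAs (FiniteDimensional K (Carrier Q d K))

noncomputable instance : Module (FreePathAlgebra Q K) (RepModule x) :=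
  Module.compHom (Carrier Q d K) (evalRel Q d K x).toRingHom

theorem smul_def (p : FreePathAlgebra Q K) (m : RepModule x) : p • m = evalRel Q d K x p m := rfl

instance : IsScalarTower K (FreePathAlgebra Q K) (RepModule x) where
  smul_assoc c p m := by simp only [smul_def, map_smul]; rfl

instance : IsNoetherian (FreePathAlgebra Q K) (RepModule x) := isNoetherian_of_tower K inferInstance

instance : IsArtinian (FreePathAlgebra Q K) (RepModule x) := isArtinian_of_tower K inferInstance

variable {x}

theorem vertex_smul (i : Fin Q.n) (m : RepModule x) : vertex Q K i • m = proj Q d K i m := by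
  rw [smul_def, vertex, evalRel, FreeAlgebra.lift_ι_apply, Sum.elim_inl]

theorem arrow_smul (a : Fin Q.numArrows) (m : RepModule x) :
    arrow Q K a • m = arrowMap Q d K x a m := by
  rw [smul_def, arrow, evalRel, FreeAlgebra.lift_ι_apply, Sum.elim_inr]

theorem vertex_smul_apply (i : Fin Q.n) (m : RepModule x) (j) :
    (vertex Q K i • m) j = if j.1 = i then m j else 0 := by
  rw [vertex_smul]; rfl

theorem arrow_smul_apply_tgt (a : Fin Q.numArrows) (m : RepModule x) (v : Fin (d (Q.tgt a))) :
    (arrow Q K a • m) ⟨Q.tgt a, v⟩ = ∑ w, x ⟨a, v, w⟩ * m ⟨Q.src a, w⟩ := by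
  simp [arrow_smul, arrowMap]

theorem arrow_smul_apply_of_ne {a : Fin Q.numArrows} (m : RepModule x) {j : Σ i, Fin (d i)}
    (hj : j.1 ≠ Q.tgt a) : (arrow Q K a • m) j = 0 := by
  simp [arrow_smul, arrowMap, hj]

theorem mem_repVar_iff {Rels : Set (FreePathAlgebra Q K)} :
    x ∈ RepVar Q d K Rels ↔ Rels ⊆ Module.annihilator (FreePathAlgebra Q K) (RepModule x) := by
  simp only [Set.subset_def, SetLike.mem_coe, Module.mem_annihilator]
  exact forall₂_congr fun _ _ ↦ LinearMap.ext_iff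

end RepModule

section Generators

variable {M N : Type*} [AddCommGroup M] [Module K M] [Module (FreePathAlgebra Q K) M]
  [IsScalarTower K (FreePathAlgebra Q K) M] [AddCommGroup N] [Module K N]
  [Module (FreePathAlgebra Q K) N] [IsScalarTower K (FreePathAlgebra Q K) N]

theorem smul_mem_of_generators {N : Submodule K M}
    (hv : ∀ (i : Fin Q.n), ∀ m ∈ N, vertex Q K i • m ∈ N)
    (ha : ∀ (a : Fin Q.numArrows), ∀ m ∈ N, arrow Q K a • m ∈ N) (p : FreePathAlgebra Q K) :
    ∀ m ∈ N, p • m ∈ N :=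
  freeAlgebra_smul_mem (Sum.rec hv ha) p

/-- A linear equivalence commuting with the generators of the free path algebra, as an equivalence
of modules. -/
def linearEquivOfGenerators (f : M ≃ₗ[K] N)
    (hv : ∀ (i : Fin Q.n) m, f (vertex Q K i • m) = vertex Q K i • f m)
    (ha : ∀ (a : Fin Q.numArrows) m, f (arrow Q K a • m) = arrow Q K a • f m) :
    M ≃ₗ[FreePathAlgebra Q K] N where
  __ := f
  map_smul' := map_freeAlgebra_smul f.toLinearMap (Sum.rec hv ha)

end Generators

end QuiverData

theorem nonempty_linearEquiv_pi_iff {R M ι : Type*} [Ring R] [AddCommGroup M] [Module R M]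
    [Finite ι] {N : ι → Type*} [∀ i, AddCommGroup (N i)] [∀ i, Module R (N i)] :
    Nonempty (M ≃ₗ[R] ∀ i, N i) ↔ ∃ P : ι → Submodule R M, iSupIndep P ∧ ⨆ i, P i = ⊤ ∧
      ∀ i, Nonempty (P i ≃ₗ[R] N i) := by
  classical
  have := Fintype.ofFinite ι
  constructor
  · rintro ⟨e⟩
    let ψ (i : ι) : N i →ₗ[R] M := e.symm.toLinearMap ∘ₗ LinearMap.single R N i
    have hψ (i : ι) : Function.Injective (ψ i) := e.symm.injective.comp (Pi.single_injective i)
    refine ⟨fun i ↦ LinearMap.range (ψ i), fun i ↦ ?_, eq_top_iff.mpr fun m _ ↦ ?_,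
      fun i ↦ ⟨(LinearEquiv.ofInjective (ψ i) (hψ i)).symm⟩⟩
    · have hle : ⨆ j, ⨆ (_ : j ≠ i), LinearMap.range (ψ j) ≤
          LinearMap.ker (LinearMap.proj i ∘ₗ e.toLinearMap) := by
        refine iSup₂_le fun j hj ↦ ?_
        rintro _ ⟨n, rfl⟩
        simp [ψ, hj.symm]
      refine Disjoint.mono_right hle (Submodule.disjoint_def.mpr ?_)
      rintro _ ⟨n, rfl⟩ hn
      have : n = 0 := by simpa [ψ] using hn
      rw [this, map_zero]
    · have hm : m = ∑ i, ψ i (e m i) := by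
        simp only [ψ, LinearMap.comp_apply, ← map_sum, LinearMap.coe_single,
          Finset.univ_sum_single]
        exact (e.symm_apply_apply m).symm
      rw [hm]
      exact Submodule.sum_mem _ fun i _ ↦ Submodule.mem_iSup_of_mem i ⟨_, rfl⟩
  · rintro ⟨P, hP, hP', e⟩
    have hint := DirectSum.isInternal_submodule_of_iSupIndep_of_iSup_eq_top hP hP'
    exact ⟨(LinearEquiv.ofBijective (DirectSum.coeLinearMap P) hint).symm ≪≫ₗ
      DirectSum.linearEquivFunOnFintype R ι _ ≪≫ₗ .piCongrRight fun i ↦ (e i).some⟩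

theorem iSupIndep_restrictScalars_iff (S : Type*) {R M ι : Type*} [Semiring S] [Semiring R]
    [AddCommMonoid M] [Module S M] [Module R M] [SMul S R] [IsScalarTower S R M]
    {P : ι → Submodule R M} : iSupIndep (fun i ↦ (P i).restrictScalars S) ↔ iSupIndep P := by
  simp only [iSupIndep, ← Submodule.restrictScalars_iSup, Submodule.disjoint_restrictScalars_iff]

namespace QuiverData

variable {Q : QuiverData} {K : Type} [Field K] {d : Fin Q.n → ℕ}

theorem stable_iff {x : RepSpace Q d K} {N : Submodule K (RepModule x)} :
    Stable Q d K x N ↔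
      ∃ P : Submodule (FreePathAlgebra Q K) (RepModule x), P.restrictScalars K = N := by
  constructor
  · refine fun hN ↦ ⟨{ N with smul_mem' := ?_ }, rfl⟩
    refine smul_mem_of_generators (N := N) (fun i m hm ↦ ?_) (fun a m hm ↦ ?_)
    · exact RepModule.vertex_smul i m ▸ hN.2 i (Submodule.mem_map_of_mem hm)
    · exact RepModule.arrow_smul a m ▸ hN.1 a (Submodule.mem_map_of_mem hm)
  · rintro ⟨P, rfl⟩
    refine ⟨fun a ↦ ?_, fun i ↦ ?_⟩ <;> rintro _ ⟨m, hm, rfl⟩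
    · exact RepModule.arrow_smul a (m : RepModule x) ▸ P.smul_mem (arrow Q K a) hm
    · exact RepModule.vertex_smul i (m : RepModule x) ▸ P.smul_mem (vertex Q K i) hm

theorem indecompRep_iff {x : RepSpace Q d K} :
    IndecompRep Q d K x ↔ IsIndecomposableModule (FreePathAlgebra Q K) (RepModule x) := by
  refine and_congr ?_ ⟨fun h N₁ N₂ hN ↦ ?_, fun h N₁ N₂ h₁ h₂ _ _ hsup hinf ↦ ?_⟩
  · rw [ne_comm, ← Submodule.nontrivial_iff K]
    exact ⟨nontrivial_of_ne (α := Submodule K (RepModule x)) _ _,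
      fun _ ↦ bot_ne_top (α := Submodule K (RepModule x))⟩
  · have hK := (Submodule.isCompl_restrictScalars_iff K).mpr hN
    exact (h _ _ (stable_iff.mpr ⟨N₁, rfl⟩) (stable_iff.mpr ⟨N₂, rfl⟩) le_top le_top
      hK.sup_eq_top hK.inf_eq_bot).imp (Submodule.restrictScalars_eq_bot_iff ..).mp
        (Submodule.restrictScalars_eq_bot_iff ..).mp
  · obtain ⟨P₁, rfl⟩ := stable_iff.mp h₁
    obtain ⟨P₂, rfl⟩ := stable_iff.mp h₂
    have hP := (Submodule.isCompl_restrictScalars_iff K).mp (IsCompl.of_eq hinf hsup)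
    exact (h P₁ P₂ hP).imp (Submodule.restrictScalars_eq_bot_iff ..).mpr
      (Submodule.restrictScalars_eq_bot_iff ..).mpr

theorem subrepIso_iff {x : RepSpace Q d K} {P : Submodule (FreePathAlgebra Q K) (RepModule x)}
    {d' : Fin Q.n → ℕ} {y : RepSpace Q d' K} :
    SubrepIso Q d K d' x (P.restrictScalars K) y ↔
      Nonempty (P ≃ₗ[FreePathAlgebra Q K] RepModule y) := by
  constructor
  · rintro ⟨φ, hker, hmap, ha, hv⟩
    let f : P →ₗ[K] RepModule y :=
      (φ : RepModule x →ₗ[K] RepModule y) ∘ₗ P.subtype.restrictScalars K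
    have hf : Function.Bijective f := by
      refine ⟨(injective_iff_map_eq_zero f).mpr fun m hm ↦ ?_, fun n ↦ ?_⟩
      · exact Subtype.ext ((Submodule.mem_bot K).mp (hker ▸ ⟨m.2, hm⟩))
      · obtain ⟨m, hm, hn⟩ := hmap.ge (Submodule.mem_top (x := n))
        exact ⟨⟨m, hm⟩, hn⟩
    refine ⟨linearEquivOfGenerators (.ofBijective f hf) (fun i m ↦ ?_) (fun a m ↦ ?_)⟩
    · rw [RepModule.vertex_smul]
      exact (congrArg φ (RepModule.vertex_smul i m.1)).trans (hv i _ m.2)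
    · rw [RepModule.arrow_smul]
      exact (congrArg φ (RepModule.arrow_smul a m.1)).trans (ha a _ m.2)
  · rintro ⟨e⟩
    obtain ⟨φ, hφ⟩ := LinearMap.exists_extend (p := P.restrictScalars K)
      (e.toLinearMap.restrictScalars K)
    have hφ' (m : RepModule x) (hm : m ∈ P) : φ m = e ⟨m, hm⟩ :=
      LinearMap.congr_fun hφ ⟨m, hm⟩
    have hsmul (p : FreePathAlgebra Q K) (m : RepModule x) (hm : m ∈ P) :
        φ (p • m) = p • φ m := by
      rw [hφ' m hm, hφ' _ (P.smul_mem p hm), ← map_smul]; rfl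
    refine ⟨φ, ?_, ?_, fun a m hm ↦ ?_, fun i m hm ↦ ?_⟩
    · refine (Submodule.eq_bot_iff _).mpr fun m ⟨hm, hm0⟩ ↦ ?_
      exact congrArg Subtype.val (e.map_eq_zero_iff.mp ((hφ' m hm).symm.trans hm0))
    · refine eq_top_iff.mpr fun n _ ↦ ⟨(e.symm n).1, (e.symm n).2, ?_⟩
      exact (hφ' _ (e.symm n).2).trans (e.apply_symm_apply n)
    · exact (congrArg φ (RepModule.arrow_smul (x := x) a m)).symm.trans
        ((hsmul _ m hm).trans (RepModule.arrow_smul a _))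
    · exact (congrArg φ (RepModule.vertex_smul (x := x) i m)).symm.trans
        ((hsmul _ m hm).trans (RepModule.vertex_smul i _))

theorem mem_directSumSet_iff {s : ℕ} {D : Fin s → Fin Q.n → ℕ}
    {S : ∀ r, Set (RepSpace Q (D r) K)} {x : RepSpace Q d K} :
    x ∈ DirectSumSet Q d K s D S ↔ ∃ y : ∀ r, RepSpace Q (D r) K, (∀ r, y r ∈ S r) ∧
      Nonempty (RepModule x ≃ₗ[FreePathAlgebra Q K] ∀ r, RepModule (y r)) := by
  simp only [nonempty_linearEquiv_pi_iff]
  constructor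
  · rintro ⟨N, hN, hdisj, htop, hS⟩
    choose P hP using fun r ↦ stable_iff.mp (hN r)
    obtain rfl : (fun r ↦ (P r).restrictScalars K) = N := funext hP
    choose y hyS hy using hS
    refine ⟨y, hyS, P, (iSupIndep_restrictScalars_iff K).mp hdisj, ?_,
      fun r ↦ subrepIso_iff.mp (hy r)⟩
    exact (Submodule.restrictScalars_eq_top_iff ..).mp
      ((Submodule.restrictScalars_iSup K P).trans htop)
  · rintro ⟨y, hyS, P, hP, hP', e⟩
    refine ⟨fun r ↦ (P r).restrictScalars K, fun r ↦ stable_iff.mpr ⟨_, rfl⟩,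
      (iSupIndep_restrictScalars_iff K).mpr hP, ?_, fun r ↦ ⟨y r, hyS r, subrepIso_iff.mpr (e r)⟩⟩
    exact (Submodule.restrictScalars_iSup K P).symm.trans
      ((Submodule.restrictScalars_eq_top_iff ..).mpr hP')

variable {Q : QuiverData} {K : Type} [Field K] {d : Fin Q.n → ℕ}

/-- The relations of the path algebra hold in a module over the free path algebra: the vertices act
as a complete system of orthogonal idempotents, and each arrow maps its source to its target. -/
structure IsPathModule (Q : QuiverData) (K : Type) [Field K] (M : Type*) [AddCommGroup M]
    [Module (FreePathAlgebra Q K) M] : Prop where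
  vertex_smul_vertex_smul (i j : Fin Q.n) (m : M) :
    vertex Q K i • vertex Q K j • m = if i = j then vertex Q K j • m else 0
  sum_vertex_smul (m : M) : ∑ i, vertex Q K i • m = m
  vertex_tgt_smul_arrow_smul (a : Fin Q.numArrows) (m : M) :
    vertex Q K (Q.tgt a) • arrow Q K a • m = arrow Q K a • m
  arrow_smul_vertex_src_smul (a : Fin Q.numArrows) (m : M) :
    arrow Q K a • vertex Q K (Q.src a) • m = arrow Q K a • m

namespace IsPathModule

theorem repModule (x : RepSpace Q d K) : IsPathModule Q K (RepModule x) where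
  vertex_smul_vertex_smul i j m := funext fun k ↦ by
    split_ifs with h
    · subst h
      simp only [RepModule.vertex_smul_apply, ← ite_and, and_self]
    · simp only [RepModule.vertex_smul_apply, ← ite_and]
      exact if_neg fun hk ↦ h (hk.1.symm.trans hk.2)
  sum_vertex_smul m := funext fun k ↦ (Finset.sum_apply k _ _).trans (by
    simp [RepModule.vertex_smul_apply])
  vertex_tgt_smul_arrow_smul a m := funext fun k ↦ by
    rw [RepModule.vertex_smul_apply]
    split_ifs with h
    · rfl
    · exact (RepModule.arrow_smul_apply_of_ne m h).symm
  arrow_smul_vertex_src_smul a m := funext fun ⟨i, v⟩ ↦ by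
    by_cases h : i = Q.tgt a
    · subst h
      simp only [RepModule.arrow_smul_apply_tgt, RepModule.vertex_smul_apply, if_true]
    · rw [RepModule.arrow_smul_apply_of_ne _ h, RepModule.arrow_smul_apply_of_ne _ h]

variable {M N : Type*} [AddCommGroup M] [Module (FreePathAlgebra Q K) M]
  [AddCommGroup N] [Module (FreePathAlgebra Q K) N]

theorem of_injective (hN : IsPathModule Q K N) (f : M →ₗ[FreePathAlgebra Q K] N)
    (hf : Function.Injective f) : IsPathModule Q K M where
  vertex_smul_vertex_smul i j m := hf (by
    simpa only [map_smul, apply_ite f, map_zero] using hN.vertex_smul_vertex_smul i j (f m))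
  sum_vertex_smul m := hf (by simpa only [map_smul, map_sum] using hN.sum_vertex_smul (f m))
  vertex_tgt_smul_arrow_smul a m := hf (by
    simpa only [map_smul] using hN.vertex_tgt_smul_arrow_smul a (f m))
  arrow_smul_vertex_src_smul a m := hf (by
    simpa only [map_smul] using hN.arrow_smul_vertex_src_smul a (f m))

theorem pi {J : Type*} {M : J → Type*} [∀ r, AddCommGroup (M r)]
    [∀ r, Module (FreePathAlgebra Q K) (M r)] (hM : ∀ r, IsPathModule Q K (M r)) :
    IsPathModule Q K (∀ r, M r) where
  vertex_smul_vertex_smul i j m := funext fun r ↦ by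
    split_ifs with h
    · exact ((hM r).vertex_smul_vertex_smul i j (m r)).trans (if_pos h)
    · exact ((hM r).vertex_smul_vertex_smul i j (m r)).trans (if_neg h)
  sum_vertex_smul m := funext fun r ↦
    (Finset.sum_apply r _ _).trans ((hM r).sum_vertex_smul (m r))
  vertex_tgt_smul_arrow_smul a m := funext fun r ↦ (hM r).vertex_tgt_smul_arrow_smul a (m r)
  arrow_smul_vertex_src_smul a m := funext fun r ↦ (hM r).arrow_smul_vertex_src_smul a (m r)

end IsPathModule

/-- Coordinates on the vertex spaces `e_i M` of a module `M`: each `e_i M` is identified with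
`S i → K`, and `coord i` is extended to `M` along the action of `e_i`. -/
structure VertexCoords (Q : QuiverData) (K : Type) [Field K] (M : Type*) [AddCommGroup M]
    [Module K M] [Module (FreePathAlgebra Q K) M] (S : Fin Q.n → Type*) where
  coord (i : Fin Q.n) : M →ₗ[K] (S i → K)
  incl (i : Fin Q.n) : (S i → K) →ₗ[K] M
  coord_incl (i : Fin Q.n) (u : S i → K) : coord i (incl i u) = u
  incl_coord (i : Fin Q.n) (m : M) : incl i (coord i m) = vertex Q K i • m

namespace VertexCoords

section Coord

variable {M : Type*} [AddCommGroup M] [Module K M] [Module (FreePathAlgebra Q K) M]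
  {S : Fin Q.n → Type*} (F : VertexCoords Q K M S)

theorem vertex_smul_incl (i : Fin Q.n) (u : S i → K) : vertex Q K i • F.incl i u = F.incl i u := by
  rw [← F.incl_coord, F.coord_incl]

theorem coord_vertex_smul_self (i : Fin Q.n) (m : M) :
    F.coord i (vertex Q K i • m) = F.coord i m := by
  rw [← F.incl_coord, F.coord_incl]

theorem coord_vertex_smul (hM : IsPathModule Q K M) (i j : Fin Q.n) (m : M) :
    F.coord i (vertex Q K j • m) = if i = j then F.coord i m else 0 := by
  rw [← F.coord_vertex_smul_self, hM.vertex_smul_vertex_smul]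
  split_ifs with h
  · rw [← h, F.coord_vertex_smul_self]
  · exact map_zero _

theorem coord_incl_of_ne (hM : IsPathModule Q K M) {i j : Fin Q.n} (hij : i ≠ j) (u : S j → K) :
    F.coord i (F.incl j u) = 0 := by
  rw [← F.vertex_smul_incl, F.coord_vertex_smul hM, if_neg hij]

theorem coord_arrow_smul_of_ne (hM : IsPathModule Q K M) {i : Fin Q.n} {a : Fin Q.numArrows}
    (hi : i ≠ Q.tgt a) (m : M) : F.coord i (arrow Q K a • m) = 0 := by
  rw [← hM.vertex_tgt_smul_arrow_smul, F.coord_vertex_smul hM, if_neg hi]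

theorem eq_of_coord_eq (hM : IsPathModule Q K M) {m n : M}
    (h : ∀ i, F.coord i m = F.coord i n) : m = n := by
  rw [← hM.sum_vertex_smul m, ← hM.sum_vertex_smul n]
  exact Finset.sum_congr rfl fun i _ ↦ by rw [← F.incl_coord, h i, F.incl_coord]

end Coord

section OfMatrix

variable {M N : Type*} [AddCommGroup M] [Module K M] [Module (FreePathAlgebra Q K) M]
  [AddCommGroup N] [Module K N] [Module (FreePathAlgebra Q K) N]
  {S T : Fin Q.n → Type*} [∀ i, Fintype (S i)] [∀ i, DecidableEq (S i)]
  (F : VertexCoords Q K M S) (F' : VertexCoords Q K N T)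

/-- The linear map acting by a given matrix on each vertex space. -/
noncomputable def ofMatrix (X : ∀ i, Matrix (T i) (S i) K) : M →ₗ[K] N :=
  ∑ i, F'.incl i ∘ₗ Matrix.toLin' (X i) ∘ₗ F.coord i

theorem coord_ofMatrix (hN : IsPathModule Q K N) (X : ∀ i, Matrix (T i) (S i) K) (i : Fin Q.n)
    (m : M) : F'.coord i (F.ofMatrix F' X m) = (X i).mulVec (F.coord i m) := by
  rw [ofMatrix, LinearMap.sum_apply, map_sum, Finset.sum_eq_single i]
  · exact F'.coord_incl i _
  · exact fun j _ hj ↦ F'.coord_incl_of_ne hN hj.symm _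
  · exact fun h ↦ absurd (Finset.mem_univ i) h

end OfMatrix

section Matrix

variable {M N : Type*} [AddCommGroup M] [Module K M] [Module (FreePathAlgebra Q K) M]
  [IsScalarTower K (FreePathAlgebra Q K) M] [AddCommGroup N] [Module K N]
  [Module (FreePathAlgebra Q K) N] [IsScalarTower K (FreePathAlgebra Q K) N]
  {S T : Fin Q.n → Type*} [∀ i, Fintype (S i)] [∀ i, DecidableEq (S i)]

/-- The matrix by which an arrow acts in given coordinates. -/
noncomputable def arrowMatrix (F : VertexCoords Q K M S) (a : Fin Q.numArrows) :
    Matrix (S (Q.tgt a)) (S (Q.src a)) K :=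
  LinearMap.toMatrix' (F.coord (Q.tgt a) ∘ₗ Algebra.lsmul K K M (arrow Q K a) ∘ₗ F.incl (Q.src a))

/-- The matrix in given coordinates of the map `e_i M → e_i N` induced by a homomorphism. -/
noncomputable def homMatrix (F : VertexCoords Q K M S) (F' : VertexCoords Q K N T)
    (f : M →ₗ[FreePathAlgebra Q K] N) (i : Fin Q.n) : Matrix (T i) (S i) K :=
  LinearMap.toMatrix' (F'.coord i ∘ₗ f.restrictScalars K ∘ₗ F.incl i)

variable (F : VertexCoords Q K M S) (F' : VertexCoords Q K N T)

theorem arrowMatrix_mulVec (hM : IsPathModule Q K M) (a : Fin Q.numArrows) (m : M) :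
    (F.arrowMatrix a).mulVec (F.coord (Q.src a) m) = F.coord (Q.tgt a) (arrow Q K a • m) := by
  rw [arrowMatrix, LinearMap.toMatrix'_mulVec, LinearMap.comp_apply, LinearMap.comp_apply,
    F.incl_coord]
  exact congrArg _ (hM.arrow_smul_vertex_src_smul a m)

theorem homMatrix_mulVec (f : M →ₗ[FreePathAlgebra Q K] N) (i : Fin Q.n) (m : M) :
    (F.homMatrix F' f i).mulVec (F.coord i m) = F'.coord i (f m) := by
  rw [homMatrix, LinearMap.toMatrix'_mulVec, LinearMap.comp_apply, LinearMap.comp_apply,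
    F.incl_coord, LinearMap.coe_restrictScalars, map_smul, F'.coord_vertex_smul_self]

variable [∀ i, Fintype (T i)] [∀ i, DecidableEq (T i)]

theorem homMatrix_mul_homMatrix (e : M ≃ₗ[FreePathAlgebra Q K] N) (i : Fin Q.n) :
    F.homMatrix F' e i * F'.homMatrix F e.symm i = 1 := by
  refine Matrix.mulVec_injective (funext fun u ↦ ?_)
  rw [← F'.coord_incl i u, ← Matrix.mulVec_mulVec, homMatrix_mulVec, homMatrix_mulVec,
    Matrix.one_mulVec]
  exact congrArg _ (e.apply_symm_apply _)

theorem arrowMatrix_eq_homMatrix_mul (hM : IsPathModule Q K M) (hN : IsPathModule Q K N)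
    (e : M ≃ₗ[FreePathAlgebra Q K] N) (a : Fin Q.numArrows) :
    F.arrowMatrix a = F'.homMatrix F e.symm (Q.tgt a) * F'.arrowMatrix a *
      F.homMatrix F' e (Q.src a) := by
  refine Matrix.mulVec_injective (funext fun u ↦ ?_)
  rw [← F.coord_incl _ u, ← Matrix.mulVec_mulVec, ← Matrix.mulVec_mulVec, homMatrix_mulVec,
    F'.arrowMatrix_mulVec hN, homMatrix_mulVec, F.arrowMatrix_mulVec hM]
  exact congrArg _ ((map_smul e.symm _ _).trans (congrArg _ (e.symm_apply_apply _))).symm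

theorem nonempty_linearEquiv_of_matrix (hM : IsPathModule Q K M) (hN : IsPathModule Q K N)
    {X : ∀ i, Matrix (S i) (T i) K} {Y : ∀ i, Matrix (T i) (S i) K} (hXY : ∀ i, X i * Y i = 1)
    (hYX : ∀ i, Y i * X i = 1)
    (h : ∀ a, F.arrowMatrix a = X (Q.tgt a) * F'.arrowMatrix a * Y (Q.src a)) :
    Nonempty (M ≃ₗ[FreePathAlgebra Q K] N) := by
  let f : M ≃ₗ[K] N := .ofLinearMap (F.ofMatrix F' Y) (F'.ofMatrix F X)
    (LinearMap.ext fun n ↦ F'.eq_of_coord_eq hN fun i ↦ by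
      simp only [LinearMap.comp_apply, coord_ofMatrix _ _ hM, coord_ofMatrix _ _ hN,
        Matrix.mulVec_mulVec, hYX, Matrix.one_mulVec, LinearMap.id_apply])
    (LinearMap.ext fun m ↦ F.eq_of_coord_eq hM fun i ↦ by
      simp only [LinearMap.comp_apply, coord_ofMatrix _ _ hM, coord_ofMatrix _ _ hN,
        Matrix.mulVec_mulVec, hXY, Matrix.one_mulVec, LinearMap.id_apply])
  have hf (i : Fin Q.n) (m : M) : F'.coord i (f m) = (Y i).mulVec (F.coord i m) :=
    coord_ofMatrix F F' hN Y i m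
  refine ⟨linearEquivOfGenerators f (fun i m ↦ F'.eq_of_coord_eq hN fun j ↦ ?_)
    (fun a m ↦ F'.eq_of_coord_eq hN fun j ↦ ?_)⟩
  · rw [hf, F.coord_vertex_smul hM, F'.coord_vertex_smul hN, hf]
    split_ifs
    · rfl
    · exact Matrix.mulVec_zero _
  · by_cases hj : j = Q.tgt a
    · subst hj
      rw [hf, ← F.arrowMatrix_mulVec hM, ← F'.arrowMatrix_mulVec hN, hf, h, Matrix.mulVec_mulVec,
        Matrix.mulVec_mulVec, Matrix.mul_assoc, ← Matrix.mul_assoc (Y _), hYX, Matrix.one_mul]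
    · rw [hf, F.coord_arrow_smul_of_ne hM hj, F'.coord_arrow_smul_of_ne hN hj, Matrix.mulVec_zero]

theorem nonempty_linearEquiv_iff (hM : IsPathModule Q K M) (hN : IsPathModule Q K N) :
    Nonempty (M ≃ₗ[FreePathAlgebra Q K] N) ↔
      ∃ (X : ∀ i, Matrix (S i) (T i) K) (Y : ∀ i, Matrix (T i) (S i) K),
        (∀ i, X i * Y i = 1) ∧ (∀ i, Y i * X i = 1) ∧
          ∀ a, F.arrowMatrix a = X (Q.tgt a) * F'.arrowMatrix a * Y (Q.src a) :=
  ⟨fun ⟨e⟩ ↦ ⟨_, _, F'.homMatrix_mul_homMatrix F e.symm, F.homMatrix_mul_homMatrix F' e,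
    F.arrowMatrix_eq_homMatrix_mul F' hM hN e⟩,
    fun ⟨_, _, hXY, hYX, h⟩ ↦ F.nonempty_linearEquiv_of_matrix F' hM hN hXY hYX h⟩

end Matrix

section Constructions

/-- The standard coordinates on `M_x`. -/
def repModule (x : RepSpace Q d K) : VertexCoords Q K (RepModule x) fun i ↦ Fin (d i) where
  coord i :=
    { toFun m v := m ⟨i, v⟩
      map_add' _ _ := rfl
      map_smul' _ _ := rfl }
  incl i :=
    { toFun u k := (Pi.single i u : ∀ i, Fin (d i) → K) k.1 k.2
      map_add' u v := funext fun k ↦ by rw [Pi.single_add]; rfl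
      map_smul' c u := funext fun k ↦ by rw [Pi.single_smul]; rfl }
  coord_incl i u := Pi.single_eq_same (M := fun i ↦ Fin (d i) → K) i u
  incl_coord i m := funext fun ⟨j, v⟩ ↦ by
    rw [RepModule.vertex_smul_apply]
    split_ifs with h
    · subst h
      exact congrFun (Pi.single_eq_same (M := fun i ↦ Fin (d i) → K) j _) v
    · exact congrFun (Pi.single_eq_of_ne (M := fun i ↦ Fin (d i) → K) h _) v

theorem arrowMatrix_repModule (x : RepSpace Q d K) (a : Fin Q.numArrows) :
    (repModule x).arrowMatrix a = .of fun v w ↦ x ⟨a, v, w⟩ := by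
  refine Matrix.mulVec_injective (funext fun u ↦ ?_)
  rw [← (repModule x).coord_incl _ u, arrowMatrix_mulVec _ (.repModule x)]
  exact funext fun v ↦ RepModule.arrow_smul_apply_tgt a _ v

variable {J : Type*} {M : J → Type*} [∀ r, AddCommGroup (M r)]
  [∀ r, Module K (M r)] [∀ r, Module (FreePathAlgebra Q K) (M r)]
  {S : J → Fin Q.n → Type*}

/-- The coordinates on a product of modules given by coordinates on the factors. -/
def pi (F : ∀ r, VertexCoords Q K (M r) (S r)) :
    VertexCoords Q K (∀ r, M r) fun i ↦ Σ r, S r i where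
  coord i :=
    { toFun m q := (F q.1).coord i (m q.1) q.2
      map_add' m n := funext fun q ↦ congrFun (map_add ((F q.1).coord i) (m q.1) (n q.1)) q.2
      map_smul' c m := funext fun q ↦ congrFun (map_smul ((F q.1).coord i) c (m q.1)) q.2 }
  incl i :=
    { toFun u r := (F r).incl i fun s ↦ u ⟨r, s⟩
      map_add' _ _ := funext fun r ↦ map_add ((F r).incl i) _ _
      map_smul' _ _ := funext fun r ↦ map_smul ((F r).incl i) _ _ }
  coord_incl i u := funext fun q ↦ congrFun ((F q.1).coord_incl i fun s ↦ u ⟨q.1, s⟩) q.2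
  incl_coord i m := funext fun r ↦ (F r).incl_coord i (m r)

theorem arrowMatrix_pi [Fintype J] [DecidableEq J]
    [∀ r, IsScalarTower K (FreePathAlgebra Q K) (M r)] [∀ r i, Fintype (S r i)]
    [∀ r i, DecidableEq (S r i)] (F : ∀ r, VertexCoords Q K (M r) (S r))
    (hM : ∀ r, IsPathModule Q K (M r))
    (a : Fin Q.numArrows) :
    (VertexCoords.pi F).arrowMatrix a = .blockDiagonal' fun r ↦ (F r).arrowMatrix a := by
  refine Matrix.mulVec_injective (funext fun u ↦ ?_)
  rw [← (VertexCoords.pi F).coord_incl _ u, arrowMatrix_mulVec _ (.pi hM)]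
  refine funext fun ⟨r, v⟩ ↦ (congrFun ((F r).arrowMatrix_mulVec (hM r) a _) v).symm.trans ?_
  simp only [Matrix.mulVec, dotProduct, Fintype.sum_sigma]
  rw [Finset.sum_eq_single r]
  · exact Finset.sum_congr rfl fun w _ ↦ by rw [Matrix.blockDiagonal'_apply_eq]; rfl
  · exact fun t _ ht ↦ Finset.sum_eq_zero fun w _ ↦ by
      rw [Matrix.blockDiagonal'_apply_ne _ _ _ ht.symm, zero_mul]
  · exact fun h ↦ absurd (Finset.mem_univ r) h

end Constructions

end VertexCoords

theorem IsPathModule.exists_vertexCoords {M : Type*} [AddCommGroup M] [Module K M]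
    [FiniteDimensional K M] [Module (FreePathAlgebra Q K) M]
    [IsScalarTower K (FreePathAlgebra Q K) M] (hM : IsPathModule Q K M) :
    ∃ d : Fin Q.n → ℕ, Nonempty (VertexCoords Q K M fun i ↦ Fin (d i)) := by
  let E (i : Fin Q.n) : Module.End K M := Algebra.lsmul K K M (vertex Q K i)
  have hE (i : Fin Q.n) (n : LinearMap.range (E i)) : vertex Q K i • (n : M) = n := by
    obtain ⟨_, m, rfl⟩ := n
    exact (hM.vertex_smul_vertex_smul i i m).trans (if_pos rfl)
  let b (i : Fin Q.n) := (Module.finBasis K (LinearMap.range (E i))).equivFun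
  exact ⟨_, ⟨{
    coord := fun i ↦ (b i).toLinearMap ∘ₗ (E i).rangeRestrict
    incl := fun i ↦ (LinearMap.range (E i)).subtype ∘ₗ (b i).symm.toLinearMap
    coord_incl := fun i u ↦ (b i).symm.injective <| Subtype.ext <| by
      simpa using! hE i ((b i).symm u)
    incl_coord := fun i m ↦ congrArg Subtype.val ((b i).symm_apply_apply _) }⟩⟩

theorem RepModule.exists_linearEquiv_submodule {x : RepSpace Q d K}
    (P : Submodule (FreePathAlgebra Q K) (RepModule x)) :
    ∃ (d' : Fin Q.n → ℕ) (y : RepSpace Q d' K),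
      Nonempty (P ≃ₗ[FreePathAlgebra Q K] RepModule y) := by
  have hP : IsPathModule Q K P := (IsPathModule.repModule x).of_injective _ P.injective_subtype
  have : FiniteDimensional K P := inferInstanceAs (FiniteDimensional K (P.restrictScalars K))
  obtain ⟨d', ⟨F⟩⟩ := hP.exists_vertexCoords
  let y : RepSpace Q d' K := fun k ↦ F.arrowMatrix k.1 k.2.1 k.2.2
  refine ⟨d', y, F.nonempty_linearEquiv_of_matrix (VertexCoords.repModule y) hP (.repModule y)
    (X := 1) (Y := 1) (fun _ ↦ mul_one _) (fun _ ↦ mul_one _) fun a ↦ ?_⟩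
  rw [VertexCoords.arrowMatrix_repModule, Pi.one_apply, Pi.one_apply, Matrix.one_mul,
    Matrix.mul_one]
  rfl

end QuiverData

namespace zariskiTopology

open MvPolynomial

variable {ι K : Type} [Field K] {δ : MvPolynomial ι K}

theorem const_mem_regularFunctions (c : K) (δ : MvPolynomial ι K) :
    (fun _ : ι → K ↦ c) ∈ regularFunctions δ :=
  algebraMap_mem _ c

theorem apply_mem_regularFunctions (k : ι) (δ : MvPolynomial ι K) :
    (fun x ↦ x k) ∈ regularFunctions δ := by
  simpa only [eval_X] using eval_mem_regularFunctions (X k) δ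

theorem mul_apply_mem_regularFunctions {l m n : Type*} [Fintype m]
    {A : (ι → K) → Matrix l m K} {B : (ι → K) → Matrix m n K}
    (hA : ∀ i j, (fun x ↦ A x i j) ∈ regularFunctions δ)
    (hB : ∀ i j, (fun x ↦ B x i j) ∈ regularFunctions δ) (i : l) (j : n) :
    (fun x ↦ (A x * B x) i j) ∈ regularFunctions δ := by
  have h : (fun x ↦ (A x * B x) i j) = ∑ k, (fun x ↦ A x i k) * fun x ↦ B x k j :=
    funext fun x ↦ by simp [Matrix.mul_apply]
  exact h ▸ sum_mem fun k _ ↦ mul_mem (hA i k) (hB k j)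

theorem inv_apply_mem_regularFunctions {n : Type*} [Fintype n] [DecidableEq n]
    (A : Matrix n n (MvPolynomial ι K)) (hA : A.det ∣ δ) (i j : n) :
    (fun x ↦ ((A.map (eval x))⁻¹) i j) ∈ regularFunctions δ := by
  obtain ⟨q, rfl⟩ := hA
  refine ⟨A.adjugate i j * q, 1, fun x hx ↦ ?_⟩
  have hdet : (A.map (eval x)).det = eval x A.det := (RingHom.map_det _ A).symm
  have hadj : (A.map (eval x)).adjugate i j = eval x (A.adjugate i j) :=
    congrFun (congrFun (RingHom.map_adjugate (eval x) A).symm i) j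
  rw [map_mul, mul_ne_zero_iff] at hx
  change (A.map (eval x))⁻¹ i j * _ = _
  rw [Matrix.inv_def, Ring.inverse_eq_inv', hdet, Matrix.smul_apply, hadj, smul_eq_mul, map_mul,
    map_mul, pow_one]
  field_simp [hx.1]

variable {I : Type} {n : I → Type}

variable (K n) in
/-- A family of square matrices whose entries are independent indeterminates. -/
noncomputable def genericMatrix (i : I) :
    Matrix (n i) (n i) (MvPolynomial (Σ i, n i × n i) K) :=
  .of fun v w ↦ X ⟨i, v, w⟩

theorem genericMatrix_map_eval (p : (Σ i, n i × n i) → K) (i : I) :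
    (genericMatrix K n i).map (eval p) = .of fun v w ↦ p ⟨i, v, w⟩ :=
  Matrix.ext fun _ _ ↦ eval_X _

variable [Fintype I] [∀ i, Fintype (n i)] [∀ i, DecidableEq (n i)]

theorem eval_prod_det_genericMatrix_ne_zero_iff {p : (Σ i, n i × n i) → K} :
    eval p (∏ i, (genericMatrix K n i).det) ≠ 0 ↔
      ∀ i, IsUnit (Matrix.of fun v w ↦ p ⟨i, v, w⟩ : Matrix (n i) (n i) K).det := by
  simp only [← genericMatrix_map_eval, map_prod, Finset.prod_ne_zero_iff, RingHom.map_det,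
    isUnit_iff_ne_zero, RingHom.mapMatrix_apply, mem_univ, true_imp_iff]

variable (K n) in
theorem prod_det_genericMatrix_ne_zero : ∏ i, (genericMatrix K n i).det ≠ 0 := by
  intro h
  refine eval_prod_det_genericMatrix_ne_zero_iff.mpr (fun i ↦ ?_)
    ((congrArg (eval fun k ↦ (1 : Matrix _ _ K) k.2.1 k.2.2) h).trans (map_zero _))
  exact isUnit_one.map Matrix.detMonoidHom

end zariskiTopology

namespace QuiverData

open zariskiTopology

theorem VertexCoords.card_eq {Q : QuiverData} {K : Type} [Field K] {M N : Type*}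
    [AddCommGroup M] [Module K M] [Module (FreePathAlgebra Q K) M]
    [IsScalarTower K (FreePathAlgebra Q K) M] [AddCommGroup N] [Module K N]
    [Module (FreePathAlgebra Q K) N] [IsScalarTower K (FreePathAlgebra Q K) N]
    {S T : Fin Q.n → Type*} [∀ i, Fintype (S i)] [∀ i, Fintype (T i)] (F : VertexCoords Q K M S)
    (F' : VertexCoords Q K N T) (e : M ≃ₗ[FreePathAlgebra Q K] N) (i : Fin Q.n) :
    Fintype.card (S i) = Fintype.card (T i) := by
  classical
  exact Matrix.square_of_invertible _ _ (F'.homMatrix_mul_homMatrix F e.symm i)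
    (F.homMatrix_mul_homMatrix F' e i)

variable {Q : QuiverData} {K : Type} [Field K] {d : Fin Q.n → ℕ}

theorem RepModule.dimension_eq {d' : Fin Q.n → ℕ} {x : RepSpace Q d K} {y : RepSpace Q d' K}
    (e : RepModule x ≃ₗ[FreePathAlgebra Q K] RepModule y) : d = d' :=
  funext fun i ↦ by
    simpa using (VertexCoords.repModule x).card_eq (VertexCoords.repModule y) e i

section DirectSum

variable {J : Type*} [Fintype J] {D : J → Fin Q.n → ℕ}

theorem RepModule.dimension_eq_sum {x : RepSpace Q d K} {y : ∀ r, RepSpace Q (D r) K}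
    (e : RepModule x ≃ₗ[FreePathAlgebra Q K] ∀ r, RepModule (y r)) (i : Fin Q.n) :
    d i = ∑ r, D r i := by
  simpa using (VertexCoords.repModule x).card_eq
    (.pi fun r ↦ VertexCoords.repModule (y r)) e i

section Matrix

variable [DecidableEq J]

/-- The representation on `K^d` obtained from the direct sum of the representations `y r` by the
change of basis `G`, with inverse `G'`. -/
noncomputable def conjSum (G : ∀ i, Matrix (Fin (d i)) (Σ r, Fin (D r i)) K)
    (G' : ∀ i, Matrix (Σ r, Fin (D r i)) (Fin (d i)) K) (y : ∀ r, RepSpace Q (D r) K) :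
    RepSpace Q d K :=
  fun k ↦ (G (Q.tgt k.1) * Matrix.blockDiagonal' (fun r ↦ .of fun v w ↦ y r ⟨k.1, v, w⟩) *
    G' (Q.src k.1)) k.2.1 k.2.2

theorem nonempty_linearEquiv_pi_iff_eq_conjSum {x : RepSpace Q d K}
    {y : ∀ r, RepSpace Q (D r) K} :
    Nonempty (RepModule x ≃ₗ[FreePathAlgebra Q K] ∀ r, RepModule (y r)) ↔
      ∃ (G : ∀ i, Matrix (Fin (d i)) (Σ r, Fin (D r i)) K)
        (G' : ∀ i, Matrix (Σ r, Fin (D r i)) (Fin (d i)) K),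
        (∀ i, G i * G' i = 1) ∧ (∀ i, G' i * G i = 1) ∧ x = conjSum G G' y := by
  have hy (r : J) := IsPathModule.repModule (y r)
  rw [(VertexCoords.repModule x).nonempty_linearEquiv_iff
    (.pi fun r ↦ VertexCoords.repModule (y r)) (.repModule x) (.pi hy)]
  refine exists₂_congr fun G G' ↦ and_congr_right' <| and_congr_right' ?_
  simp only [VertexCoords.arrowMatrix_repModule, VertexCoords.arrowMatrix_pi _ hy]
  exact ⟨fun h ↦ funext fun ⟨a, v, w⟩ ↦ congrFun (congrFun (h a) v) w,
    fun h a ↦ Matrix.ext fun v w ↦ congrFun h ⟨a, v, w⟩⟩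

theorem conjSum_mem_regularFunctions {ι : Type} {δ : MvPolynomial ι K}
    {G : (ι → K) → ∀ i, Matrix (Fin (d i)) (Σ r, Fin (D r i)) K}
    {G' : (ι → K) → ∀ i, Matrix (Σ r, Fin (D r i)) (Fin (d i)) K}
    {y : (ι → K) → ∀ r, RepSpace Q (D r) K}
    (hG : ∀ i v q, (fun p ↦ G p i v q) ∈ regularFunctions δ)
    (hG' : ∀ i q v, (fun p ↦ G' p i q v) ∈ regularFunctions δ)
    (hy : ∀ r k, (fun p ↦ y p r k) ∈ regularFunctions δ) (k : Coords Q d) :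
    (fun p ↦ conjSum (G p) (G' p) (y p) k) ∈ regularFunctions δ := by
  refine mul_apply_mem_regularFunctions
    (mul_apply_mem_regularFunctions (hG _) fun ⟨r, v⟩ ⟨t, w⟩ ↦ ?_) (hG' _) _ _
  by_cases h : r = t
  · subst h
    simpa only [Matrix.blockDiagonal'_apply_eq] using! hy r ⟨k.1, v, w⟩
  · simpa only [Matrix.blockDiagonal'_apply_ne _ _ _ h] using! zero_mem _

theorem nonempty_linearEquiv_pi_iff_exists_isUnit_det {x : RepSpace Q d K}
    {y : ∀ r, RepSpace Q (D r) K} {G : ∀ i, Matrix (Fin (d i)) (Σ r, Fin (D r i)) K}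
    {G' : ∀ i, Matrix (Σ r, Fin (D r i)) (Fin (d i)) K} (hGG' : ∀ i, G i * G' i = 1)
    (hG'G : ∀ i, G' i * G i = 1) :
    Nonempty (RepModule x ≃ₗ[FreePathAlgebra Q K] ∀ r, RepModule (y r)) ↔
      ∃ E : ∀ i, Matrix (Fin (d i)) (Fin (d i)) K, (∀ i, IsUnit (E i).det) ∧
        conjSum (fun i ↦ E i * G i) (fun i ↦ G' i * (E i)⁻¹) y = x := by
  rw [nonempty_linearEquiv_pi_iff_eq_conjSum]
  constructor
  · rintro ⟨X, X', hXX', -, rfl⟩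
    have hinv (i : Fin Q.n) : (X i * G' i) * (G i * X' i) = 1 := by
      rw [Matrix.mul_assoc, ← Matrix.mul_assoc (G' i), hG'G, Matrix.one_mul, hXX']
    refine ⟨fun i ↦ X i * G' i, fun i ↦ Matrix.isUnit_det_of_right_inverse (hinv i), ?_⟩
    simp only [Matrix.inv_eq_right_inv (hinv _), Matrix.mul_assoc, hG'G, Matrix.mul_one]
    simp only [← Matrix.mul_assoc, hG'G, Matrix.one_mul]
  · rintro ⟨E, hE, rfl⟩
    refine ⟨_, _, fun i ↦ ?_, fun i ↦ ?_, rfl⟩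
    · rw [Matrix.mul_assoc, ← Matrix.mul_assoc (G i), hGG', Matrix.one_mul,
        Matrix.mul_nonsing_inv _ (hE i)]
    · rw [Matrix.mul_assoc, ← Matrix.mul_assoc _ (E i), Matrix.nonsing_inv_mul _ (hE i),
        Matrix.one_mul, hG'G]

end Matrix

theorem exists_linearEquiv_pi (hd : ∀ i, d i = ∑ r, D r i) (y : ∀ r, RepSpace Q (D r) K) :
    ∃ x : RepSpace Q d K,
      Nonempty (RepModule x ≃ₗ[FreePathAlgebra Q K] ∀ r, RepModule (y r)) := by
  have e (i : Fin Q.n) : Fin (d i) ≃ Σ r, Fin (D r i) :=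
    Fintype.equivOfCardEq (by simpa using hd i)
  classical
  exact ⟨_, nonempty_linearEquiv_pi_iff_eq_conjSum.mpr
    ⟨fun i ↦ Matrix.submatrix 1 (e i) id, fun i ↦ Matrix.submatrix 1 id (e i),
      fun i ↦ by rw [← Matrix.submatrix_mul _ _ _ _ _ Function.bijective_id]; simp,
      fun i ↦ by simp, rfl⟩⟩

theorem isIrreducible_setOf_linearEquiv_pi [Infinite K] (hd : ∀ i, d i = ∑ r, D r i)
    (y : ∀ r, RepSpace Q (D r) K) :
    IsIrreducible {x : RepSpace Q d K |
      Nonempty (RepModule x ≃ₗ[FreePathAlgebra Q K] ∀ r, RepModule (y r))} := by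
  classical
  obtain ⟨x₀, hx₀⟩ := exists_linearEquiv_pi hd y
  obtain ⟨G, G', hGG', hG'G, -⟩ := nonempty_linearEquiv_pi_iff_eq_conjSum.mp hx₀
  let h (p : (Σ i, Fin (d i) × Fin (d i)) → K) (i : Fin Q.n) : Matrix (Fin (d i)) (Fin (d i)) K :=
    .of fun v w ↦ p ⟨i, v, w⟩
  let δ := ∏ i, (genericMatrix K (fun i ↦ Fin (d i)) i).det
  have hh (i v w) : (fun p ↦ h p i v w) ∈ regularFunctions δ := apply_mem_regularFunctions _ δ
  have hh' (i v w) : (fun p ↦ (h p i)⁻¹ v w) ∈ regularFunctions δ := by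
    have hdvd : (genericMatrix K (fun i ↦ Fin (d i)) i).det ∣ δ :=
      Finset.dvd_prod_of_mem _ (mem_univ i)
    simpa only [genericMatrix_map_eval] using inv_apply_mem_regularFunctions _ hdvd v w
  have hreg := conjSum_mem_regularFunctions (G := fun p i ↦ h p i * G i)
    (G' := fun p i ↦ G' i * (h p i)⁻¹) (y := fun _ ↦ y)
    (fun i ↦ mul_apply_mem_regularFunctions (hh i) fun v q ↦ const_mem_regularFunctions (G i v q) δ)
    (fun i ↦ mul_apply_mem_regularFunctions
      (fun q v ↦ const_mem_regularFunctions (G' i q v) δ) (hh' i))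
    (fun r k ↦ const_mem_regularFunctions (y r k) δ)
  have himage := isIrreducible_image_of_mem_regularFunctions
    (prod_det_genericMatrix_ne_zero K _) hreg
  refine (congrArg IsIrreducible (Set.ext fun x ↦ ?_)).mp himage
  simp only [Set.mem_image, Set.mem_ofPred_eq, eval_prod_det_genericMatrix_ne_zero_iff,
    nonempty_linearEquiv_pi_iff_exists_isUnit_det hGG' hG'G]
  exact ⟨fun ⟨p, hp, hx⟩ ↦ ⟨_, hp, hx⟩, fun ⟨E, hE, hx⟩ ↦ ⟨fun k ↦ E k.1 k.2.1 k.2.2, hE, hx⟩⟩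

end DirectSum

variable {Q : QuiverData} {K : Type} [Field K] {Rels : Set (FreePathAlgebra Q K)}
  {d : Fin Q.n → ℕ}

theorem mem_repVar_iff_of_linearEquiv_pi {J : Type*} {D : J → Fin Q.n → ℕ} {x : RepSpace Q d K}
    {y : ∀ r, RepSpace Q (D r) K}
    (e : RepModule x ≃ₗ[FreePathAlgebra Q K] ∀ r, RepModule (y r)) :
    x ∈ RepVar Q d K Rels ↔ ∀ r, y r ∈ RepVar Q (D r) K Rels := by
  simp only [RepModule.mem_repVar_iff, e.annihilator_eq, Module.annihilator_pi,
    Submodule.coe_iInf, Set.subset_iInter_iff]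

section Locus

variable {J : Type*} {D : J → Fin Q.n → ℕ} {S T : ∀ r, Set (GenV Q (D r) K Rels)}

variable (d) in
/-- The direct sum `⨁ r, S r` inside `Rep_d(Λ)`: the points whose module is a direct sum of modules
encoded by points of the `S r`. -/
def directSumLocus (S : ∀ r, Set (GenV Q (D r) K Rels)) : Set (GenV Q d K Rels) :=
  {x | ∃ y ∈ Set.univ.pi S,
    Nonempty (RepModule x.1 ≃ₗ[FreePathAlgebra Q K] ∀ r, RepModule (y r).1)}

theorem directSumLocus_mono (h : ∀ r, S r ⊆ T r) : directSumLocus d S ⊆ directSumLocus d T :=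
  fun _ ⟨y, hy, e⟩ ↦ ⟨y, Set.pi_mono (fun r _ ↦ h r) hy, e⟩

theorem mem_directSumLocus_singleton {x : GenV Q d K Rels} {y : ∀ r, GenV Q (D r) K Rels} :
    x ∈ directSumLocus d (fun r ↦ {y r}) ↔
      Nonempty (RepModule x.1 ≃ₗ[FreePathAlgebra Q K] ∀ r, RepModule (y r).1) := by
  simp only [directSumLocus, Set.univ_pi_singleton, Set.mem_singleton_iff, exists_eq_left,
    Set.mem_ofPred_eq]

theorem mem_directSumLocus_unit {S : Set (GenV Q d K Rels)} {x : GenV Q d K Rels} :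
    x ∈ directSumLocus d (fun _ : Unit ↦ S) ↔
      ∃ y ∈ S, Nonempty (RepModule x.1 ≃ₗ[FreePathAlgebra Q K] RepModule y.1) :=
  ⟨fun ⟨y, hy, ⟨e⟩⟩ ↦ ⟨y (), hy () trivial, ⟨e ≪≫ₗ LinearEquiv.piUnique _ _⟩⟩,
    fun ⟨y, hy, ⟨e⟩⟩ ↦ ⟨fun _ ↦ y, fun _ _ ↦ hy,
      ⟨e ≪≫ₗ (LinearEquiv.piUnique _ fun _ : Unit ↦ RepModule y.1).symm⟩⟩⟩

theorem directSumLocus_comp_equiv {I : Type*} (σ : I ≃ J) (S : ∀ r, Set (GenV Q (D r) K Rels)) :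
    directSumLocus d (fun i ↦ S (σ i)) = directSumLocus d S := by
  ext x
  constructor
  · rintro ⟨y, hy, ⟨e⟩⟩
    obtain ⟨z, rfl⟩ := (Equiv.piCongrLeft (fun r ↦ GenV Q (D r) K Rels) σ).symm.surjective y
    exact ⟨z, fun r _ ↦ (σ.forall_congr_right (q := fun r ↦ z r ∈ S r)).mp (hy · trivial) r,
      ⟨e ≪≫ₗ LinearEquiv.piCongrLeft _ (fun r ↦ RepModule (z r).1) σ⟩⟩
  · rintro ⟨z, hz, ⟨e⟩⟩
    exact ⟨fun i ↦ z (σ i), fun i _ ↦ hz (σ i) trivial,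
      ⟨e ≪≫ₗ (LinearEquiv.piCongrLeft _ (fun r ↦ RepModule (z r).1) σ).symm⟩⟩

theorem directSumLocus_directSumLocus_subset {I : J → Type*} {E : ∀ r, I r → Fin Q.n → ℕ}
    (S : ∀ r i, Set (GenV Q (E r i) K Rels)) :
    directSumLocus d (fun r ↦ directSumLocus (D r) (S r)) ⊆
      directSumLocus d fun p : Σ r, I r ↦ S p.1 p.2 := by
  rintro x ⟨y, hy, ⟨e⟩⟩
  choose z hz f using fun r ↦ hy r trivial
  exact ⟨fun p ↦ z p.1 p.2, fun p _ ↦ hz p.1 p.2 trivial,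
    ⟨e ≪≫ₗ LinearEquiv.piCongrRight (fun r ↦ (f r).some) ≪≫ₗ
      (LinearEquiv.piCurry _ fun r i ↦ RepModule (z r i).1).symm⟩⟩

theorem setOf_mem_directSumSet_eq {s : ℕ} {D : Fin s → Fin Q.n → ℕ}
    (S : ∀ r, Set (GenV Q (D r) K Rels)) :
    {x : GenV Q d K Rels | x.1 ∈ DirectSumSet Q d K s D fun r ↦ Subtype.val '' S r} =
      directSumLocus d S := by
  ext x
  simp only [Set.mem_ofPred_eq, mem_directSumSet_iff]
  constructor
  · rintro ⟨y, hy, e⟩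
    choose z hz hzy using hy
    obtain rfl : (fun r ↦ (z r).1) = y := funext hzy
    exact ⟨z, fun r _ ↦ hz r, e⟩
  · rintro ⟨y, hy, e⟩
    exact ⟨_, fun r ↦ ⟨y r, hy r trivial, rfl⟩, e⟩

end Locus

section Topology

variable {J : Type*} {D : J → Fin Q.n → ℕ}
  {S : ∀ r, Set (GenV Q (D r) K Rels)}

theorem continuous_conjSum_update [Fintype J] [DecidableEq J]
    (G : ∀ i, Matrix (Fin (d i)) (Σ r, Fin (D r i)) K)
    (G' : ∀ i, Matrix (Σ r, Fin (D r i)) (Fin (d i)) K) (y : ∀ r, RepSpace Q (D r) K) (j : J) :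
    Continuous fun t ↦ conjSum G G' (Function.update y j t) := by
  open zariskiTopology in
  refine continuous_of_mem_regularFunctions_one <| conjSum_mem_regularFunctions
    (fun i v q ↦ const_mem_regularFunctions _ _) (fun i q v ↦ const_mem_regularFunctions _ _)
    fun r k ↦ ?_
  obtain rfl | hr := eq_or_ne r j
  · simpa only [Function.update_self] using apply_mem_regularFunctions k 1
  · simpa only [Function.update_of_ne hr] using const_mem_regularFunctions _ _

theorem isSeparatelyOpen_setOf_linearEquiv_pi [Finite J] [DecidableEq J]
    {U : Set (GenV Q d K Rels)} (hU : IsOpen U) :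
    IsSeparatelyOpen {y : ∀ r, GenV Q (D r) K Rels | ∃ x ∈ U,
      Nonempty (RepModule x.1 ≃ₗ[FreePathAlgebra Q K] ∀ r, RepModule (y r).1)} := by
  have := Fintype.ofFinite J
  intro y j
  obtain ⟨W, hW, rfl⟩ := hU
  have hset : {t | ∃ x ∈ Subtype.val ⁻¹' W, Nonempty (RepModule (x : GenV Q d K Rels).1
        ≃ₗ[FreePathAlgebra Q K] ∀ r, RepModule (Function.update y j t r).1)} =
      ⋃ (G) (G') (_ : (∀ i, G i * G' i = 1) ∧ (∀ i, G' i * G i = 1)),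
        {t | conjSum G G' (Function.update (fun r ↦ (y r).1) j t.1) ∈ W} := by
    ext t
    have hupdate : (fun r ↦ (Function.update y j t r).1) =
        Function.update (fun r ↦ (y r).1) j t.1 :=
      funext fun r ↦ Function.apply_update (fun _ z ↦ Subtype.val z) y j t r
    have hiso (x : RepSpace Q d K) := nonempty_linearEquiv_pi_iff_eq_conjSum (x := x)
      (y := fun r ↦ (Function.update y j t r).1)
    simp only [Set.mem_iUnion, Set.mem_ofPred_eq, ← hupdate]
    constructor
    · rintro ⟨x, hx, e⟩
      obtain ⟨G, G', hGG', hG'G, hxG⟩ := (hiso x.1).mp e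
      exact ⟨G, G', ⟨hGG', hG'G⟩, hxG ▸ hx⟩
    · rintro ⟨G, G', ⟨hGG', hG'G⟩, hW⟩
      have e := (hiso _).mpr ⟨G, G', hGG', hG'G, rfl⟩
      exact ⟨⟨_, (mem_repVar_iff_of_linearEquiv_pi e.some).mpr fun r ↦ (Function.update y j t r).2⟩,
        hW, e⟩
  refine hset ▸ isOpen_iUnion fun G ↦ isOpen_iUnion fun G' ↦ isOpen_iUnion fun _ ↦ ?_
  exact hW.preimage ((continuous_conjSum_update G G' _ j).comp continuous_subtype_val)

theorem directSumLocus_closure_subset [Finite J] :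
    directSumLocus d (fun r ↦ closure (S r)) ⊆ closure (directSumLocus d S) := by
  classical
  rintro x ⟨y, hy, e⟩
  refine mem_closure_iff.mpr fun U hU hx ↦ ?_
  obtain ⟨z, hz, x', hx', e'⟩ :=
    (isSeparatelyOpen_setOf_linearEquiv_pi hU).nonempty_pi_univ_of_closure ⟨y, hy, x, hx, e⟩
  exact ⟨x', hx', z, hz, e'⟩

theorem isPreirreducible_directSumLocus_singleton [Infinite K] [Finite J]
    (y : ∀ r, GenV Q (D r) K Rels) : IsPreirreducible (directSumLocus d fun r ↦ {y r}) := by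
  have := Fintype.ofFinite J
  rintro _ _ ⟨U, hU, rfl⟩ ⟨V, hV, rfl⟩ ⟨u, hu, huU⟩ ⟨v, hv, hvV⟩
  rw [mem_directSumLocus_singleton] at hu hv
  obtain ⟨x, ⟨e⟩, hxUV⟩ := (isIrreducible_setOf_linearEquiv_pi
    (RepModule.dimension_eq_sum hu.some) fun r ↦ (y r).1).isPreirreducible U V hU hV
    ⟨u, hu, huU⟩ ⟨v, hv, hvV⟩
  exact ⟨⟨x, (mem_repVar_iff_of_linearEquiv_pi e).mpr fun r ↦ (y r).2⟩,
    mem_directSumLocus_singleton.mpr ⟨e⟩, hxUV⟩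

theorem isIrreducible_directSumLocus [Infinite K] [Fintype J] (hd : ∀ i, d i = ∑ r, D r i)
    (hS : ∀ r, IsIrreducible (S r)) : IsIrreducible (directSumLocus d S) := by
  classical
  choose y hy using fun r ↦ (hS r).nonempty
  refine ⟨?_, fun U V hU hV ⟨x, ⟨y, hy, e⟩, hx⟩ ⟨x', ⟨y', hy', e'⟩, hx'⟩ ↦ ?_⟩
  · obtain ⟨x, ⟨e⟩⟩ := exists_linearEquiv_pi hd fun r ↦ (y r).1
    exact ⟨⟨x, (mem_repVar_iff_of_linearEquiv_pi e).mpr fun r ↦ (y r).2⟩, y, fun r _ ↦ hy r, ⟨e⟩⟩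
  · obtain ⟨z, hz, ⟨u, hu, f⟩, ⟨v, hv, g⟩⟩ :=
      (isSeparatelyOpen_setOf_linearEquiv_pi hU).nonempty_pi_univ_inter
        (isSeparatelyOpen_setOf_linearEquiv_pi hV) (fun r ↦ (hS r).isPreirreducible)
        ⟨y, hy, x, hx, e⟩ ⟨y', hy', x', hx', e'⟩
    obtain ⟨w, hw, hwUV⟩ := isPreirreducible_directSumLocus_singleton z U V hU hV
      ⟨u, mem_directSumLocus_singleton.mpr f, hu⟩ ⟨v, mem_directSumLocus_singleton.mpr g, hv⟩
    exact ⟨w, directSumLocus_mono (fun r ↦ Set.singleton_subset_iff.mpr (hz r trivial)) hw, hwUV⟩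

end Topology

end QuiverData

namespace zariskiTopology

open MvPolynomial

variable {ι K : Type} [Field K]

theorem isClosed_setOf_eq_of_mem_regularFunctions_one {f g : (ι → K) → K}
    (hf : f ∈ regularFunctions 1) (hg : g ∈ regularFunctions 1) : IsClosed {x | f x = g x} := by
  obtain ⟨p, hp⟩ := mem_regularFunctions_one.mp (sub_mem hf hg)
  simpa only [← hp, Pi.sub_apply, sub_eq_zero] using isClosed_eval_eq_zero p

theorem isClosed_setOf_mul_eq_one {l m : Type*} [Fintype m] [DecidableEq l]
    {A : (ι → K) → Matrix l m K} {B : (ι → K) → Matrix m l K}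
    (hA : ∀ i j, (fun x ↦ A x i j) ∈ regularFunctions 1)
    (hB : ∀ i j, (fun x ↦ B x i j) ∈ regularFunctions 1) : IsClosed {x | A x * B x = 1} := by
  simp only [← Matrix.ext_iff, Set.ofPred_forall]
  exact isClosed_iInter fun i ↦ isClosed_iInter fun j ↦
    isClosed_setOf_eq_of_mem_regularFunctions_one (mul_apply_mem_regularFunctions hA hB i j)
      (const_mem_regularFunctions _ _)

end zariskiTopology

theorem isLocallyClosed_iInter {X ι : Type*} [TopologicalSpace X] [Finite ι] {S : ι → Set X}
    (hS : ∀ i, IsLocallyClosed (S i)) : IsLocallyClosed (⋂ i, S i) := by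
  choose U Z hU hZ hUZ using hS
  exact ⟨⋂ i, U i, ⋂ i, Z i, isOpen_iInter_of_finite hU, isClosed_iInter hZ, by
    simp only [hUZ, Set.iInter_inter_distrib]⟩

namespace QuiverData

open zariskiTopology

variable {Q : QuiverData} {K : Type} [Field K] {Rels : Set (FreePathAlgebra Q K)}
  {d : Fin Q.n → ℕ}

theorem evalRel_apply_mem_regularFunctions_one (b : FreePathAlgebra Q K)
    {v : RepSpace Q d K → Carrier Q d K} (hv : ∀ k, (fun x ↦ v x k) ∈ regularFunctions 1)
    (k : Σ i, Fin (d i)) : (fun x ↦ evalRel Q d K x b (v x) k) ∈ regularFunctions 1 := by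
  induction b using FreeAlgebra.induction generalizing v k with
  | grade0 c => simpa [Module.algebraMap_end_apply] using! Subalgebra.smul_mem _ (hv k) c
  | grade1 g =>
    obtain i | a := g
    · by_cases hk : k.1 = i
      · simpa [evalRel, proj, hk] using hv k
      · simpa [evalRel, proj, hk] using! zero_mem _
    · by_cases hk : k.1 = Q.tgt a
      · have h : ∑ w, (fun x ↦ x ⟨a, Fin.cast (congrArg d hk) k.2, w⟩ * v x ⟨Q.src a, w⟩) ∈
            regularFunctions (1 : MvPolynomial (Coords Q d) K) :=
          sum_mem fun w _ ↦ mul_mem (apply_mem_regularFunctions _ 1) (hv _)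
        simpa [evalRel, arrowMap, hk, Finset.sum_fn] using h
      · simpa [evalRel, arrowMap, hk] using! zero_mem _
  | mul b c hb hc => simpa using hb (hc hv) k
  | add b c hb hc => simpa using! add_mem (hb hv k) (hc hv k)

theorem isClosed_repVar : IsClosed (RepVar Q d K Rels) := by
  simp only [RepVar, LinearMap.ext_iff, funext_iff, Set.ofPred_forall]
  exact isClosed_iInter fun b ↦ isClosed_iInter fun _ ↦ isClosed_iInter fun v ↦
    isClosed_iInter fun k ↦ isClosed_setOf_eq_of_mem_regularFunctions_one
      (evalRel_apply_mem_regularFunctions_one b (v := fun _ ↦ v)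
        (fun k ↦ const_mem_regularFunctions (v k) 1) k) (zero_mem _)

variable {J : Type} [Finite J] {D : J → Fin Q.n → ℕ} {S : ∀ r, Set (GenV Q (D r) K Rels)}

theorem exists_isLocallyClosed_image_eq_setOf_linearEquiv_pi (hS : ∀ r, IsLocallyClosed (S r)) :
    ∃ (ι : Type) (_ : Finite ι) (Y : Set (ι → K)) (q : Coords Q d → MvPolynomial ι K),
      IsLocallyClosed Y ∧ (fun p k ↦ MvPolynomial.eval p (q k)) '' Y =
        {x : RepSpace Q d K | ∃ y ∈ Set.univ.pi S,
          Nonempty (RepModule x ≃ₗ[FreePathAlgebra Q K] ∀ r, RepModule (y r).1)} := by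
  classical
  have := Fintype.ofFinite J
  let ι := (Σ i, Fin (d i) × Σ r, Fin (D r i)) ⊕ (Σ i, (Σ r, Fin (D r i)) × Fin (d i)) ⊕
    Σ r, Coords Q (D r)
  let G (p : ι → K) (i : Fin Q.n) : Matrix (Fin (d i)) (Σ r, Fin (D r i)) K :=
    .of fun v q ↦ p (.inl ⟨i, v, q⟩)
  let G' (p : ι → K) (i : Fin Q.n) : Matrix (Σ r, Fin (D r i)) (Fin (d i)) K :=
    .of fun q v ↦ p (.inr (.inl ⟨i, q, v⟩))
  let y (p : ι → K) (r : J) : RepSpace Q (D r) K := fun k ↦ p (.inr (.inr ⟨r, k⟩))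
  have hG (i v q) : (fun p ↦ G p i v q) ∈ regularFunctions 1 := apply_mem_regularFunctions _ 1
  have hG' (i q v) : (fun p ↦ G' p i q v) ∈ regularFunctions 1 := apply_mem_regularFunctions _ 1
  have hy (r k) : (fun p ↦ y p r k) ∈ regularFunctions 1 := apply_mem_regularFunctions _ 1
  choose q hq using fun k ↦
    mem_regularFunctions_one.mp (conjSum_mem_regularFunctions hG hG' hy k)
  have hq' (p : ι → K) : (fun k ↦ MvPolynomial.eval p (q k)) = conjSum (G p) (G' p) (y p) :=
    funext fun k ↦ (hq k p).symm
  refine ⟨ι, inferInstance, ((⋂ i, {p | G p i * G' p i = 1}) ∩ ⋂ i, {p | G' p i * G p i = 1}) ∩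
      ⋂ r, (fun p ↦ y p r) ⁻¹' (Subtype.val '' S r), q, ?_, ?_⟩
  · refine ((isClosed_iInter fun i ↦ isClosed_setOf_mul_eq_one (hG i) (hG' i)).inter
      (isClosed_iInter fun i ↦ isClosed_setOf_mul_eq_one (hG' i) (hG i))).isLocallyClosed.inter <|
      isLocallyClosed_iInter fun r ↦ IsLocallyClosed.preimage ?_
        (continuous_of_mem_regularFunctions_one (hy r))
    exact (hS r).image Topology.IsInducing.subtypeVal
      (by simpa using isClosed_repVar.isLocallyClosed)
  · ext x
    simp only [Set.mem_image, Set.mem_inter_iff, Set.mem_iInter, Set.mem_preimage, hq',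
      Set.mem_ofPred_eq, nonempty_linearEquiv_pi_iff_eq_conjSum]
    constructor
    · rintro ⟨p, ⟨⟨hGG', hG'G⟩, hpS⟩, rfl⟩
      choose z hz hzp using hpS
      exact ⟨z, fun r _ ↦ hz r, G p, G' p, hGG', hG'G, by rw [funext hzp]⟩
    · rintro ⟨z, hz, H, H', hHH', hH'H, rfl⟩
      exact ⟨Sum.elim (fun k ↦ H k.1 k.2.1 k.2.2)
        (Sum.elim (fun k ↦ H' k.1 k.2.1 k.2.2) fun k ↦ (z k.1).1 k.2),
        ⟨⟨hHH', hH'H⟩, fun r ↦ ⟨z r, hz r trivial, rfl⟩⟩, rfl⟩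

theorem exists_isOpen_closure_directSumLocus_inter_subset [IsAlgClosed K]
    (hS : ∀ r, IsLocallyClosed (S r)) (hirr : IsIrreducible (directSumLocus d S)) :
    ∃ O, IsOpen O ∧ (directSumLocus d S ∩ O).Nonempty ∧
      closure (directSumLocus d S) ∩ O ⊆ directSumLocus d S := by
  obtain ⟨ι, _, Y, q, hY, hqY⟩ := exists_isLocallyClosed_image_eq_setOf_linearEquiv_pi (d := d) hS
  obtain ⟨𝒞, hfin, hloc, hq𝒞⟩ := exists_finite_isLocallyClosed_image_eq_sUnion q hY
  refine exists_isOpen_closure_inter_subset_of_isIrreducible hirr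
    (hfin.image (Subtype.val ⁻¹' ·)) ?_ ?_
  · rintro _ ⟨c, hc, rfl⟩
    exact (hloc c hc).preimage continuous_subtype_val
  · rw [Set.sUnion_image, ← Set.preimage_iUnion₂, ← Set.sUnion_eq_biUnion, ← hq𝒞, hqY]
    rfl

variable {Q : QuiverData} {K : Type} [Field K] {Rels : Set (FreePathAlgebra Q K)}
  {d : Fin Q.n → ℕ} {C : Set (GenV Q d K Rels)}

section Component

variable [Infinite K]

theorem eq_closure_directSumLocus {J : Type*} [Finite J] {D : J → Fin Q.n → ℕ}
    {S : ∀ r, Set (GenV Q (D r) K Rels)} (hC : C ∈ irreducibleComponents (GenV Q d K Rels))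
    (hS : ∀ r, IsIrreducible (S r)) (h : C ⊆ closure (directSumLocus d S)) :
    C = closure (directSumLocus d S) := by
  have := Fintype.ofFinite J
  obtain ⟨x, y, -, ⟨e⟩⟩ := closure_nonempty_iff.mp (hC.prop.nonempty.mono h)
  exact hC.eq_of_subset
    (isIrreducible_directSumLocus (RepModule.dimension_eq_sum e) hS).closure h

theorem mem_of_linearEquiv (hC : C ∈ irreducibleComponents (GenV Q d K Rels))
    {x y : GenV Q d K Rels} (hy : y ∈ C)
    (e : RepModule x.1 ≃ₗ[FreePathAlgebra Q K] RepModule y.1) : x ∈ C := by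
  have hCC : C ⊆ directSumLocus d fun _ : Unit ↦ C :=
    fun z hz ↦ mem_directSumLocus_unit.mpr ⟨z, hz, ⟨.refl _ _⟩⟩
  rw [eq_closure_directSumLocus hC (fun _ ↦ hC.prop) (hCC.trans subset_closure)]
  exact subset_closure (mem_directSumLocus_unit.mpr ⟨y, hy, ⟨e⟩⟩)

end Component

/-- A subset of `Rep_d(Λ)` is generically indecomposable if the modules it encodes are
indecomposable on a nonempty relatively open subset. For irreducible subsets the latter is dense. -/
def IsGenericallyIndecomposable (C : Set (GenV Q d K Rels)) : Prop :=
  ∃ W, IsOpen W ∧ (C ∩ W).Nonempty ∧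
    ∀ y ∈ C ∩ W, IsIndecomposableModule (FreePathAlgebra Q K) (RepModule y.1)

theorem isCanonicalDecomposition_iff {s : ℕ} {D : Fin s → Fin Q.n → ℕ}
    {Cs : ∀ r, Set (GenV Q (D r) K Rels)} :
    IsCanonicalDecomposition K Q d Rels C s D Cs ↔
      (∀ i, d i = ∑ r, D r i) ∧ (∀ r, Cs r ∈ irreducibleComponents (GenV Q (D r) K Rels)) ∧
        (∀ r, IsGenericallyIndecomposable (Cs r)) ∧ C = closure (directSumLocus d Cs) := by
  rw [IsCanonicalDecomposition, setOf_mem_directSumSet_eq]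
  refine and_congr_right' (and_congr_right fun hCs ↦ and_congr_left' (forall_congr' fun r ↦ ?_))
  simp only [indecompRep_iff]
  constructor
  · rintro ⟨_, -, ⟨W, hW, rfl⟩, hdense, hind⟩
    exact ⟨W, hW, closure_nonempty_iff.mp ((hCs r).prop.nonempty.mono hdense), hind⟩
  · rintro ⟨W, hW, hne, hind⟩
    exact ⟨_, Set.inter_subset_left, ⟨W, hW, rfl⟩,
      subset_closure_inter_of_isPreirreducible_of_isOpen (hCs r).prop.isPreirreducible hW hne, hind⟩

section Existence

theorem RepModule.nontrivial_iff {x : RepSpace Q d K} :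
    Nontrivial (RepModule x) ↔ 0 < ∑ i, d i := by
  have h : Module.finrank K (RepModule x) = ∑ i, d i :=
    (Module.finrank_fintype_fun_eq_card K (η := Σ i, Fin (d i))).trans (by
      simp only [Fintype.card_sigma, Fintype.card_fin])
  rw [← h, Module.finrank_pos_iff]

theorem exists_linearEquiv_bool {x : GenV Q d K Rels} (hx : Nontrivial (RepModule x.1))
    (hdec : ¬ IsIndecomposableModule (FreePathAlgebra Q K) (RepModule x.1)) :
    ∃ (D : Bool → Fin Q.n → ℕ) (y : ∀ b, GenV Q (D b) K Rels), (∀ b, ∑ i, D b i < ∑ i, d i) ∧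
      Nonempty (RepModule x.1 ≃ₗ[FreePathAlgebra Q K] ∀ b, RepModule (y b).1) := by
  obtain ⟨N₁, N₂, hN, hN₁, hN₂⟩ : ∃ N₁ N₂ : Submodule (FreePathAlgebra Q K) (RepModule x.1),
      IsCompl N₁ N₂ ∧ N₁ ≠ ⊥ ∧ N₂ ≠ ⊥ := by
    simpa [IsIndecomposableModule, hx] using hdec
  let P (b : Bool) := if b then N₁ else N₂
  choose D y f using fun b ↦ RepModule.exists_linearEquiv_submodule (P b)
  obtain ⟨e⟩ : Nonempty (RepModule x.1 ≃ₗ[FreePathAlgebra Q K] ∀ b, RepModule (y b)) :=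
    nonempty_linearEquiv_pi_iff.mpr ⟨P, (iSupIndep_pair (i := true) (j := false) (by decide)
      (by decide)).mpr hN.disjoint, iSup_bool_eq.trans hN.sup_eq_top, f⟩
  have hpos (b : Bool) : 0 < ∑ i, D b i := by
    rw [← RepModule.nontrivial_iff (x := y b), ← (f b).some.toEquiv.nontrivial_congr,
      Submodule.nontrivial_iff_ne_bot]
    cases b <;> assumption
  have hsum : ∑ i, d i = ∑ i, D true i + ∑ i, D false i := by
    simp only [RepModule.dimension_eq_sum e, Fintype.sum_bool, sum_add_distrib]
  have hy := (mem_repVar_iff_of_linearEquiv_pi e).mp x.2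
  refine ⟨D, fun b ↦ ⟨y b, hy b⟩, fun b ↦ ?_, ⟨e⟩⟩
  have := hpos true
  have := hpos false
  cases b <;> omega

theorem exists_subset_closure_directSumLocus_bool (hC : IsIrreducible C) (hd : 0 < ∑ i, d i)
    (hdec : ¬ IsGenericallyIndecomposable C) :
    ∃ (D : Bool → Fin Q.n → ℕ) (S : ∀ b, Set (GenV Q (D b) K Rels)),
      (∀ b, ∑ i, D b i < ∑ i, d i) ∧
      (∀ b, S b ∈ irreducibleComponents (GenV Q (D b) K Rels)) ∧
      C ⊆ closure (directSumLocus d S) := by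
  let 𝒟 : Set (Bool → Fin Q.n → ℕ) := {D | ∀ b, ∑ i, D b i < ∑ i, d i}
  have h𝒟 : 𝒟.Finite := (Set.finite_Icc 0 fun _ _ ↦ ∑ i, d i).subset fun D hD ↦
    ⟨zero_le, fun b i ↦ (single_le_sum_of_canonicallyOrdered (mem_univ i)).trans (hD b).le⟩
  let ℱ : Set (Set (GenV Q d K Rels)) := ⋃ D ∈ 𝒟, (fun S ↦ closure (directSumLocus d S)) ''
    Set.univ.pi fun b ↦ irreducibleComponents (GenV Q (D b) K Rels)
  have hℱ : ℱ.Finite := h𝒟.biUnion fun D _ ↦ (Set.Finite.pi fun b ↦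
    TopologicalSpace.NoetherianSpace.finite_irreducibleComponents).image _
  have hℱ_closed : ∀ Z ∈ ℱ, IsClosed Z := by
    simp only [ℱ, Set.mem_iUnion]
    rintro _ ⟨D, -, S, -, rfl⟩
    exact isClosed_closure
  have hdecomposable : {x : GenV Q d K Rels |
      ¬ IsIndecomposableModule (FreePathAlgebra Q K) (RepModule x.1)} ⊆ ⋃₀ ℱ := by
    intro x hx
    obtain ⟨D, y, hD, e⟩ := exists_linearEquiv_bool (RepModule.nontrivial_iff.mpr hd) hx
    exact ⟨_, Set.mem_biUnion hD ⟨fun b ↦ irreducibleComponent (y b),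
      fun b _ ↦ irreducibleComponent_mem_irreducibleComponents _, rfl⟩,
      subset_closure ⟨y, fun b _ ↦ mem_irreducibleComponent, e⟩⟩
  have hCℱ : C ⊆ ⋃₀ ℱ := by
    by_contra hC
    obtain ⟨x, hxC, hx⟩ := Set.not_subset.mp hC
    have hclosed : IsClosed (⋃₀ ℱ) := Set.sUnion_eq_biUnion ▸ hℱ.isClosed_biUnion hℱ_closed
    exact hdec ⟨_, hclosed.isOpen_compl, ⟨x, hxC, hx⟩,
      fun y hy ↦ not_not.mp fun h ↦ hy.2 (hdecomposable h)⟩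
  obtain ⟨_, hZ, hCZ⟩ := isIrreducible_iff_sUnion_isClosed.mp hC hℱ.toFinset
    (by simpa using hℱ_closed) (by simpa using hCℱ)
  simp only [ℱ, Set.Finite.mem_toFinset, Set.mem_iUnion] at hZ
  obtain ⟨D, hD, S, hS, rfl⟩ := hZ
  exact ⟨D, S, hD, fun b ↦ hS b trivial, hCZ⟩

theorem exists_subset_closure_directSumLocus (hC : C ∈ irreducibleComponents (GenV Q d K Rels)) :
    ∃ (J : Type) (_ : Fintype J) (D : J → Fin Q.n → ℕ) (S : ∀ r, Set (GenV Q (D r) K Rels)),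
      (∀ r, S r ∈ irreducibleComponents (GenV Q (D r) K Rels)) ∧
      (∀ r, IsGenericallyIndecomposable (S r)) ∧ C ⊆ closure (directSumLocus d S) := by
  induction h : ∑ i, d i using Nat.strong_induction_on generalizing d with
  | h m ih =>
    subst h
    obtain hd | hd := (Nat.zero_le (∑ i, d i)).eq_or_lt
    · refine ⟨Empty, inferInstance, nofun, nofun, nofun, nofun, fun x _ ↦ subset_closure ?_⟩
      have : Subsingleton (RepModule x.1) := by
        rw [← not_nontrivial_iff_subsingleton, RepModule.nontrivial_iff, ← hd]
        exact lt_irrefl 0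
      exact ⟨nofun, nofun, ⟨LinearEquiv.ofSubsingleton _ _⟩⟩
    by_cases hind : IsGenericallyIndecomposable C
    · exact ⟨Unit, inferInstance, fun _ ↦ d, fun _ ↦ C, fun _ ↦ hC, fun _ ↦ hind,
        fun x hx ↦ subset_closure (mem_directSumLocus_unit.mpr ⟨x, hx, ⟨.refl _ _⟩⟩)⟩
    obtain ⟨D, S, hD, hS, hCS⟩ := exists_subset_closure_directSumLocus_bool hC.prop hd hind
    choose J _ E T hT hT_ind hST using fun b ↦ ih _ (hD b) (hS b) rfl
    refine ⟨Σ b, J b, inferInstance, fun p ↦ E p.1 p.2, fun p ↦ T p.1 p.2, fun p ↦ hT p.1 p.2,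
      fun p ↦ hT_ind p.1 p.2, ?_⟩
    calc C ⊆ closure (directSumLocus d S) := hCS
      _ ⊆ closure (directSumLocus d fun b ↦ closure (directSumLocus (D b) (T b))) :=
        closure_mono (directSumLocus_mono hST)
      _ ⊆ closure (directSumLocus d fun b ↦ directSumLocus (D b) (T b)) :=
        closure_minimal directSumLocus_closure_subset isClosed_closure
      _ ⊆ closure (directSumLocus d fun p : Σ b, J b ↦ T p.1 p.2) :=
        closure_mono (directSumLocus_directSumLocus_subset T)

theorem exists_isCanonicalDecomposition [Infinite K]
    (hC : C ∈ irreducibleComponents (GenV Q d K Rels)) :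
    ∃ (s : ℕ) (D : Fin s → Fin Q.n → ℕ) (Cs : ∀ r, Set (GenV Q (D r) K Rels)),
      IsCanonicalDecomposition K Q d Rels C s D Cs := by
  obtain ⟨J, _, D, S, hS, hind, hCS⟩ := exists_subset_closure_directSumLocus hC
  obtain ⟨x, y, -, ⟨e⟩⟩ := closure_nonempty_iff.mp (hC.prop.nonempty.mono hCS)
  let σ := (Fintype.equivFin J).symm
  refine ⟨_, fun r ↦ D (σ r), fun r ↦ S (σ r), isCanonicalDecomposition_iff.mpr
    ⟨fun i ↦ ?_, fun r ↦ hS _, fun r ↦ hind _, ?_⟩⟩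
  · rw [RepModule.dimension_eq_sum e, σ.sum_comp fun r ↦ D r i]
  · rw [directSumLocus_comp_equiv]
    exact eq_closure_directSumLocus hC (fun r ↦ (hS r).prop) hCS

end Existence

section Uniqueness

theorem exists_isLocallyClosed_indecomposable
    (hC : C ∈ irreducibleComponents (GenV Q d K Rels)) (hind : IsGenericallyIndecomposable C) :
    ∃ V ⊆ C, IsLocallyClosed V ∧ C ⊆ closure V ∧ ∀ y ∈ V,
      IsIndecomposableModule (FreePathAlgebra Q K) (RepModule y.1) ∧
      ∀ Z ∈ irreducibleComponents (GenV Q d K Rels), y ∈ Z → Z = C := by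
  obtain ⟨W, hW, hCW, hW_ind⟩ := hind
  let 𝒵 := irreducibleComponents (GenV Q d K Rels) \ {C}
  have h𝒵 : 𝒵.Finite := TopologicalSpace.NoetherianSpace.finite_irreducibleComponents.sdiff
  have h𝒵_closed : ∀ Z ∈ 𝒵, IsClosed Z := fun Z hZ ↦ isClosed_of_mem_irreducibleComponents Z hZ.1
  have hO : IsOpen (⋃₀ 𝒵)ᶜ :=
    (Set.sUnion_eq_biUnion ▸ h𝒵.isClosed_biUnion h𝒵_closed : IsClosed (⋃₀ 𝒵)).isOpen_compl
  have hCO : (C ∩ (⋃₀ 𝒵)ᶜ).Nonempty := by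
    rw [← Set.sdiff_eq, Set.sdiff_nonempty]
    exact fun h ↦ (mem_of_subset_sUnion_irreducibleComponents C hC 𝒵 h𝒵 Set.sdiff_subset h).2 rfl
  refine ⟨C ∩ (W ∩ (⋃₀ 𝒵)ᶜ), Set.inter_subset_left,
    (isClosed_of_mem_irreducibleComponents C hC).isLocallyClosed.inter
      (hW.inter hO).isLocallyClosed,
    subset_closure_inter_of_isPreirreducible_of_isOpen hC.prop.isPreirreducible (hW.inter hO)
      (hC.prop.isPreirreducible _ _ hW hO hCW hCO), fun y hy ↦ ⟨hW_ind y ⟨hy.1, hy.2.1⟩, ?_⟩⟩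
  exact fun Z hZ hyZ ↦ by_contra fun hZC ↦ hy.2.2 ⟨Z, ⟨hZ, hZC⟩, hyZ⟩

variable [IsAlgClosed K] {I J : Type} [Finite I] [Finite J] {D : I → Fin Q.n → ℕ}
  {E : J → Fin Q.n → ℕ} {S : ∀ r, Set (GenV Q (D r) K Rels)} {T : ∀ r, Set (GenV Q (E r) K Rels)}

theorem exists_isOpen_inter_subset_directSumLocus {V : ∀ r, Set (GenV Q (D r) K Rels)}
    (hV : ∀ r, IsLocallyClosed (V r)) (hVS : ∀ r, V r ⊆ S r) (hSV : ∀ r, S r ⊆ closure (V r))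
    (hS : IsIrreducible (closure (directSumLocus d S))) :
    ∃ O, IsOpen O ∧ (closure (directSumLocus d S) ∩ O).Nonempty ∧
      closure (directSumLocus d S) ∩ O ⊆ directSumLocus d V := by
  have hclosure : closure (directSumLocus d S) = closure (directSumLocus d V) :=
    (closure_minimal ((directSumLocus_mono hSV).trans directSumLocus_closure_subset)
      isClosed_closure).antisymm (closure_mono (directSumLocus_mono hVS))
  rw [hclosure] at hS ⊢
  obtain ⟨O, hO, hne, hsub⟩ :=
    exists_isOpen_closure_directSumLocus_inter_subset hV (isIrreducible_iff_closure.mp hS)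
  exact ⟨O, hO, hne.mono (Set.inter_subset_inter_left O subset_closure), hsub⟩

theorem dimension_eq_and_heq {d' : Fin Q.n → ℕ} {C' : Set (GenV Q d' K Rels)}
    (hC' : C' ∈ irreducibleComponents (GenV Q d' K Rels)) {x : GenV Q d K Rels}
    {y : GenV Q d' K Rels} (hy : y ∈ C')
    (hx : ∀ Z ∈ irreducibleComponents (GenV Q d K Rels), x ∈ Z → Z = C)
    (e : RepModule x.1 ≃ₗ[FreePathAlgebra Q K] RepModule y.1) : d = d' ∧ HEq C C' := by
  obtain rfl := RepModule.dimension_eq e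
  exact ⟨rfl, heq_of_eq (hx C' hC' (mem_of_linearEquiv hC' hy e)).symm⟩

theorem exists_equiv_of_closure_directSumLocus_eq
    (hS : ∀ r, S r ∈ irreducibleComponents (GenV Q (D r) K Rels))
    (hS_ind : ∀ r, IsGenericallyIndecomposable (S r))
    (hT : ∀ r, T r ∈ irreducibleComponents (GenV Q (E r) K Rels))
    (hT_ind : ∀ r, IsGenericallyIndecomposable (T r)) (hC : IsIrreducible C)
    (hCS : C = closure (directSumLocus d S)) (hCT : C = closure (directSumLocus d T)) :
    ∃ σ : I ≃ J, (∀ r, D r = E (σ r)) ∧ ∀ r, HEq (S r) (T (σ r)) := by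
  choose V hVS hV hSV hV_ind using fun r ↦ exists_isLocallyClosed_indecomposable (hS r) (hS_ind r)
  choose V' hVT hV' hTV hV'_ind using
    fun r ↦ exists_isLocallyClosed_indecomposable (hT r) (hT_ind r)
  obtain ⟨O, hO, hCO, hOV⟩ := exists_isOpen_inter_subset_directSumLocus hV hVS hSV (hCS ▸ hC)
  obtain ⟨O', hO', hCO', hOV'⟩ := exists_isOpen_inter_subset_directSumLocus hV' hVT hTV (hCT ▸ hC)
  rw [← hCS] at hCO hOV
  rw [← hCT] at hCO' hOV'
  obtain ⟨x, hxC, hxO, hxO'⟩ := hC.isPreirreducible O O' hO hO' hCO hCO'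
  obtain ⟨y, hy, ⟨e⟩⟩ := hOV ⟨hxC, hxO⟩
  obtain ⟨z, hz, ⟨f⟩⟩ := hOV' ⟨hxC, hxO'⟩
  obtain ⟨σ, hσ⟩ := exists_equiv_of_pi_linearEquiv_pi
    (fun r ↦ (hV_ind r (y r) (hy r trivial)).1.isLocalRing_end)
    (fun r ↦ (hV'_ind r (z r) (hz r trivial)).1) (e.symm ≪≫ₗ f)
  have h (r : I) := dimension_eq_and_heq (hT (σ r)) (hVT _ (hz _ trivial))
    (hV_ind r (y r) (hy r trivial)).2 (hσ r).some
  exact ⟨σ, fun r ↦ (h r).1, fun r ↦ (h r).2⟩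

end Uniqueness

end QuiverData

open QuiverData in
/-- Crawley-Boevey–Schröer. Every irreducible component `C` of
`Rep_d(Λ)` is the closure of a direct sum of indecomposable irreducible components
`C_r ⊆ Rep_{d^{(r)}}(Λ)` for a decomposition `d = ∑ d^{(r)}`; the `d^{(r)}` and `C_r` are
unique up to reordering. -/
theorem statement_3 (K : Type) [Field K] [IsAlgClosed K]
    (Q : QuiverData) (d : Fin Q.n → ℕ)
    (Rels : Set (FreeAlgebra K (Fin Q.n ⊕ Fin Q.numArrows)))
    (C : Set (GenV Q d K Rels))
    (hC : C ∈ irreducibleComponents (GenV Q d K Rels)) :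
    ∃ (s : ℕ) (D : Fin s → Fin Q.n → ℕ) (Cs : ∀ r : Fin s, Set (GenV Q (D r) K Rels)),
      IsCanonicalDecomposition K Q d Rels C s D Cs ∧
      ∀ (s' : ℕ) (D' : Fin s' → Fin Q.n → ℕ)
        (Cs' : ∀ r : Fin s', Set (GenV Q (D' r) K Rels)),
        IsCanonicalDecomposition K Q d Rels C s' D' Cs' →
        ∃ σ : Fin s ≃ Fin s', (∀ r, D r = D' (σ r)) ∧ ∀ r, HEq (Cs r) (Cs' (σ r)) := by
  obtain ⟨s, D, Cs, h⟩ := exists_isCanonicalDecomposition hC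
  refine ⟨s, D, Cs, h, fun s' D' Cs' h' ↦ ?_⟩
  obtain ⟨-, hS, hS_ind, hCS⟩ := isCanonicalDecomposition_iff.mp h
  obtain ⟨-, hT, hT_ind, hCT⟩ := isCanonicalDecomposition_iff.mp h'
  exact exists_equiv_of_closure_directSumLocus_eq hS hS_ind hT hT_ind hC.prop hCS hCT
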